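/- arXiv:math/0603374 — 3 statements merged into one kernel-verified Lean document; each statement's English description precedes it below -/
import Mathlib

section
/- For all i, j ∈ {1,…,n}, the positive Demazure module V^+_{w_0 s_i}(ϖ_j) equals V(ϖ_j) if i ≠ j, and equals the direct sum ⊕_{μ ∈ Ω(ϖ_j) \ {w_0ϖ_j}} V(ϖ_j)_μ of all weight spaces of V(ϖ_j) except the lowest one if i = j. -/
open scoped TensorProduct

/-- The `q`-factorial `(q - q⁻¹)(q² - q⁻²)⋯(qᵐ - q⁻ᵐ)`. -/
noncomputable def qfac (t : ℂ) (m : ℕ) : ℂ :=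
  ∏ j ∈ Finset.range m, (t ^ (j + 1) - t⁻¹ ^ (j + 1))

/-- The `q`-binomial coefficient `[m k]` at parameter `t`. -/
noncomputable def qbinom (t : ℂ) (m k : ℕ) : ℂ :=
  qfac t m / (qfac t k * qfac t (m - k))

/-- The defining relations of the quantised enveloping algebra `U_q(𝔤)` associated to a
Cartan matrix `a` with symmetrising integers `d`, on elements `E i`, `F i`, `K i` of a
`ℂ`-algebra `B`: the `K i` are commuting units, conjugation by `K i` rescales `E j` and
`F j` by `q_i^{±a i j}` (where `q_i = q^{d i}`), the commutator `[E i, F j]` is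
`δ_{ij} (K_i - K_i⁻¹)/(q_i - q_i⁻¹)`, and the quantum Serre relations hold. -/
def UqRels (q : ℂ) {n : ℕ} (a : Fin n → Fin n → ℤ) (d : Fin n → ℕ)
    (B : Type) [Ring B] [Algebra ℂ B] (E F : Fin n → B) (K : Fin n → Bˣ) : Prop :=
  (∀ i j, (K i : B) * (K j : B) = (K j : B) * (K i : B)) ∧
  (∀ i j, (K i : B) * E j = (q ^ ((d i : ℤ) * a i j)) • (E j * (K i : B))) ∧
  (∀ i j, (K i : B) * F j = (q ^ (-((d i : ℤ) * a i j))) • (F j * (K i : B))) ∧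
  (∀ i j, E i * F j - F j * E i =
    if i = j then (q ^ (d i : ℤ) - q ^ (-(d i : ℤ)))⁻¹ • ((K i : B) - (((K i)⁻¹ : Bˣ) : B))
    else 0) ∧
  (∀ i j, i ≠ j → ∑ k ∈ Finset.range ((1 - a i j).toNat + 1),
      ((-1 : ℂ) ^ k * qbinom (q ^ (d i : ℤ)) ((1 - a i j).toNat) k) •
        (E i ^ ((1 - a i j).toNat - k) * E j * E i ^ k) = 0) ∧
  (∀ i j, i ≠ j → ∑ k ∈ Finset.range ((1 - a i j).toNat + 1),
      ((-1 : ℂ) ^ k * qbinom (q ^ (d i : ℤ)) ((1 - a i j).toNat) k) •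
        (F i ^ ((1 - a i j).toNat - k) * F j * F i ^ k) = 0)

/-- The weight space of weight `μ = ∑ μ i ϖ i` in a `U_q(𝔤)`-module: the set of vectors on
which each `K i` acts by the scalar `q^{(μ, α_i)} = q^{μ i * d i}`. -/
noncomputable def wtSp (q : ℂ) {n : ℕ} (d : Fin n → ℕ)
    {U : Type} [Ring U] [Algebra ℂ U] (K : Fin n → Uˣ)
    {Vc : Type} [AddCommGroup Vc] [Module ℂ Vc] (ρ : U →ₐ[ℂ] Module.End ℂ Vc)
    (μ : Fin n → ℤ) : Submodule ℂ Vc :=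
  ⨅ i : Fin n, LinearMap.ker (ρ (K i : U) - (q ^ (μ i * (d i : ℤ))) • (1 : Module.End ℂ Vc))

/-- `ξ` is a dual vector of weight `μ`:  equivalently (via the antipode-twisted action on the
dual module), `ξ` vanishes on every weight space of weight `ν ≠ -μ`. -/
noncomputable def inDualWt (q : ℂ) {n : ℕ} (d : Fin n → ℕ)
    {U : Type} [Ring U] [Algebra ℂ U] (K : Fin n → Uˣ)
    {Vc : Type} [AddCommGroup Vc] [Module ℂ Vc] (ρ : U →ₐ[ℂ] Module.End ℂ Vc)
    (μ : Fin n → ℤ) (ξ : Module.Dual ℂ Vc) : Prop :=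
  ∀ ν : Fin n → ℤ, ν ≠ -μ → ∀ x ∈ wtSp q d K ρ ν, ξ x = 0

/-- The Demazure-type submodule generated by the weight space of weight `ν` under the
subalgebra of `U` generated by `gens` (take `gens = Set.range E` for `V⁺_w(λ)` with
`ν = wλ`, and `gens = Set.range F` for `V⁻_w(λ)`). -/
noncomputable def demazure (q : ℂ) {n : ℕ} (d : Fin n → ℕ)
    {U : Type} [Ring U] [Algebra ℂ U] (gens : Set U) (K : Fin n → Uˣ)
    {Vc : Type} [AddCommGroup Vc] [Module ℂ Vc] (ρ : U →ₐ[ℂ] Module.End ℂ Vc)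
    (ν : Fin n → ℤ) : Submodule ℂ Vc :=
  Submodule.span ℂ
    {x | ∃ y ∈ Algebra.adjoin ℂ gens, ∃ u ∈ wtSp q d K ρ ν, x = ρ y u}

/-- A two-sided ideal of a (possibly noncommutative) ring is prime if it is proper and
`x R y ⊆ P` implies `x ∈ P` or `y ∈ P`. -/
def IsPrimeTwoSided {R : Type*} [Ring R] (P : TwoSidedIdeal R) : Prop :=
  P ≠ ⊤ ∧ ∀ x y : R, (∀ r : R, x * r * y ∈ P) → x ∈ P ∨ y ∈ P

/-- An element `r` of a ring is normal if `rR = Rr`. -/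
def IsNormalElem {R : Type*} [Ring R] (r : R) : Prop :=
  (∀ x, ∃ y, r * x = y * r) ∧ ∀ x, ∃ y, x * r = r * y

/-- The ideal `Q⁺_{w}` of `O_q(G)`: generated by the coordinate functions `c^{ϖ_j}_{ξ,v}` with
`v` a highest weight vector of `V(ϖ_j)` and `ξ` orthogonal to the Demazure module
`V⁺_w(ϖ_j)`. -/
noncomputable def Qplus (q : ℂ) {n : ℕ} (d : Fin n → ℕ)
    {U : Type} [Ring U] [Algebra ℂ U] (E : Fin n → U) (K : Fin n → Uˣ)
    {V : (Fin n → ℕ) → Type} [∀ c, AddCommGroup (V c)] [∀ c, Module ℂ (V c)]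
    (ρ : ∀ c, U →ₐ[ℂ] Module.End ℂ (V c))
    {W : Type} [Group W] (σ : W →* Multiplicative (AddAut (Fin n → ℤ)))
    {A : Type} [Ring A]
    (cf : ∀ c : Fin n → ℕ, Module.Dual ℂ (V c) → V c → A)
    (w : W) : TwoSidedIdeal A :=
  TwoSidedIdeal.span
    {x | ∃ j : Fin n, ∃ ξ : Module.Dual ℂ (V (Pi.single j 1)),
      ∃ v ∈ wtSp q d K (ρ (Pi.single j 1)) (fun k => ((Pi.single j 1 : Fin n → ℕ) k : ℤ)),
        (∀ y ∈ demazure q d (Set.range E) K (ρ (Pi.single j 1))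
            (σ w (fun k => ((Pi.single j 1 : Fin n → ℕ) k : ℤ))), ξ y = 0) ∧
        x = cf (Pi.single j 1) ξ v}

/-- The ideal `Q⁻_{w}` of `O_q(G)`: generated by the coordinate functions `c^{ϖ_j}_{ξ,v}` with
`v` a lowest weight vector of `V(ϖ_j)` and `ξ` orthogonal to the Demazure module
`V⁻_{w w₀}(ϖ_j)`. -/
noncomputable def Qminus (q : ℂ) {n : ℕ} (d : Fin n → ℕ)
    {U : Type} [Ring U] [Algebra ℂ U] (F : Fin n → U) (K : Fin n → Uˣ)
    {V : (Fin n → ℕ) → Type} [∀ c, AddCommGroup (V c)] [∀ c, Module ℂ (V c)]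
    (ρ : ∀ c, U →ₐ[ℂ] Module.End ℂ (V c))
    {W : Type} [Group W] (σ : W →* Multiplicative (AddAut (Fin n → ℤ))) (w₀ : W)
    {A : Type} [Ring A]
    (cf : ∀ c : Fin n → ℕ, Module.Dual ℂ (V c) → V c → A)
    (w : W) : TwoSidedIdeal A :=
  TwoSidedIdeal.span
    {x | ∃ j : Fin n, ∃ ξ : Module.Dual ℂ (V (Pi.single j 1)),
      ∃ v ∈ wtSp q d K (ρ (Pi.single j 1)) (σ w₀ (fun k => ((Pi.single j 1 : Fin n → ℕ) k : ℤ))),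
        (∀ y ∈ demazure q d (Set.range F) K (ρ (Pi.single j 1))
            (σ (w * w₀) (fun k => ((Pi.single j 1 : Fin n → ℕ) k : ℤ))), ξ y = 0) ∧
        x = cf (Pi.single j 1) ξ v}



/-! ### Helper material -/

namespace DemAux

/-- The simple root `α_k` in fundamental weight coordinates. -/
def rt {n : ℕ} (a : Fin n → Fin n → ℤ) (k : Fin n) : Fin n → ℤ := fun i => a i k

/-- An abstract weight module with raising and lowering operators. -/
structure WRep {n : ℕ} (a : Fin n → Fin n → ℤ) {V : Type} [AddCommGroup V] [Module ℂ V]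
    (e f : Fin n → V →ₗ[ℂ] V) (Wt : (Fin n → ℤ) → Submodule ℂ V) (c : Fin n → ℤ → ℂ) : Prop where
  he : ∀ k μ x, x ∈ Wt μ → e k x ∈ Wt (μ + rt a k)
  hf : ∀ k μ x, x ∈ Wt μ → f k x ∈ Wt (μ - rt a k)
  hcomm : ∀ i j μ x, x ∈ Wt μ → e i (f j x) - f j (e i x) = if i = j then c i (μ i) • x else 0
  hsimple : ∀ S : Set V, (∀ x ∈ S, ∃ μ, x ∈ Wt μ) →
    (∀ k, ∀ x ∈ S, e k x ∈ Submodule.span ℂ S) → (∀ k, ∀ x ∈ S, f k x ∈ Submodule.span ℂ S) →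
    Submodule.span ℂ S = ⊥ ∨ Submodule.span ℂ S = ⊤
  codd : ∀ i m, c i (-m) = - c i m
  cne : ∀ i m, m ≠ 0 → c i m ≠ 0
  cid : ∀ i m r, c i (r + 1) * c i (m - r) - c i r * c i (m - r + 1) = c i (m - 2 * r)

variable {n : ℕ} {a : Fin n → Fin n → ℤ} {V : Type} [AddCommGroup V] [Module ℂ V]
    {e f : Fin n → V →ₗ[ℂ] V} {Wt : (Fin n → ℤ) → Submodule ℂ V} {c : Fin n → ℤ → ℂ}

theorem WRep.swap (R : WRep a e f Wt c) : WRep a f e (fun μ => Wt (-μ)) c where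
  he k μ x hx := by
    have := R.hf k _ x hx
    convert this using 2
    abel
  hf k μ x hx := by
    have := R.he k _ x hx
    convert this using 2
    abel
  hcomm i j μ x hx := by
    have h := R.hcomm j i _ x hx
    rw [← neg_sub, h]
    by_cases hij : i = j
    · subst hij
      simp [R.codd]
    · rw [if_neg hij, if_neg (Ne.symm hij), neg_zero]
  hsimple S h1 h2 h3 := R.hsimple S (fun x hx => by
    obtain ⟨μ, hμ⟩ := h1 x hx
    exact ⟨-μ, hμ⟩) h3 h2
  codd := R.codd
  cne := R.cne
  cid := R.cid

/-- Monomials in the `f k` applied to `v`. -/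
inductive Words (f : Fin n → V →ₗ[ℂ] V) (v : V) : V → Prop
  | base : Words f v v
  | step (k : Fin n) (x : V) : Words f v x → Words f v (f k x)

theorem WRep.gen (R : WRep a e f Wt c) {v : V} {ν : Fin n → ℤ} (hv : v ∈ Wt ν) (hv0 : v ≠ 0)
    (hk : ∀ k, e k v = 0) (N : Submodule ℂ V) (hvN : v ∈ N)
    (hN : ∀ k, ∀ x ∈ N, f k x ∈ N) : N = ⊤ := by
  set S : Set V := {x | Words f v x} with hS
  have hwt : ∀ x ∈ S, ∃ μ, x ∈ Wt μ := by
    intro x hx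
    induction hx with
    | base => exact ⟨ν, hv⟩
    | step k x _ ih =>
      obtain ⟨μ, hμ⟩ := ih
      exact ⟨_, R.hf k μ x hμ⟩
  have hfS : ∀ k, ∀ x ∈ S, f k x ∈ Submodule.span ℂ S := fun k x hx =>
    Submodule.subset_span (Words.step k x hx)
  have hfS' : ∀ k, ∀ x ∈ Submodule.span ℂ S, f k x ∈ Submodule.span ℂ S := by
    intro k x hx
    have : Submodule.span ℂ S ≤ (Submodule.span ℂ S).comap (f k) :=
      Submodule.span_le.2 fun y hy => hfS k y hy
    exact this hx
  have heS : ∀ k, ∀ x ∈ S, e k x ∈ Submodule.span ℂ S := by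
    intro k x hx
    induction hx with
    | base => rw [hk k]; exact Submodule.zero_mem _
    | step l x hx ih =>
      obtain ⟨μ, hμ⟩ := hwt x hx
      have h := R.hcomm k l μ x hμ
      rw [sub_eq_iff_eq_add] at h
      rw [h]
      refine Submodule.add_mem _ ?_ (hfS' l _ ih)
      split_ifs
      · exact Submodule.smul_mem _ _ (Submodule.subset_span hx)
      · exact Submodule.zero_mem _
  have hSN : Submodule.span ℂ S ≤ N := by
    refine Submodule.span_le.2 ?_
    intro x hx
    induction hx with
    | base => exact hvN
    | step k x _ ih => exact hN k x ih
  rcases R.hsimple S hwt heS hfS with h | h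
  · exfalso
    apply hv0
    have : v ∈ Submodule.span ℂ S := Submodule.subset_span Words.base
    rw [h] at this
    simpa using this
  · rw [h] at hSN
    exact top_le_iff.1 hSN

/-- `x` of weight `ν` outside `S` that lies in the sum of the weight spaces in `S` is zero. -/
theorem indep_zero (hI : iSupIndep Wt) {S : Set (Fin n → ℤ)} {ν : Fin n → ℤ} (hν : ν ∉ S) {x : V}
    (hx : x ∈ Wt ν) (hxS : x ∈ ⨆ μ ∈ S, Wt μ) : x = 0 := by
  have h := hI ν
  rw [Submodule.disjoint_def] at h
  refine h x hx ?_
  refine (iSup₂_le ?_ : (⨆ μ ∈ S, Wt μ) ≤ _) hxS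
  intro μ hμ
  exact le_iSup₂_of_le μ (fun h => hν (h ▸ hμ)) le_rfl

/-- All weights lie in a set containing the highest weight and closed under subtracting roots. -/
theorem WRep.wts (R : WRep a e f Wt c) (hI : iSupIndep Wt) {v : V} {ν : Fin n → ℤ}
    (hv : v ∈ Wt ν) (hv0 : v ≠ 0)
    (hk : ∀ k, e k v = 0) (S : Set (Fin n → ℤ)) (hνS : ν ∈ S)
    (hS : ∀ k, ∀ μ ∈ S, μ - rt a k ∈ S) (μ : Fin n → ℤ) (hμ : Wt μ ≠ ⊥) : μ ∈ S := by
  by_contra hμS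
  have htop := R.gen hv hv0 hk (⨆ μ ∈ S, Wt μ)
    ((le_iSup₂_of_le ν hνS le_rfl : Wt ν ≤ _) hv) (by
      intro k x hx
      have : (⨆ μ ∈ S, Wt μ) ≤ (⨆ μ ∈ S, Wt μ).comap (f k) := by
        refine iSup₂_le ?_
        intro μ hμ y hy
        exact (le_iSup₂_of_le _ (hS k μ hμ) le_rfl : Wt (μ - rt a k) ≤ _) (R.hf k μ y hy)
      exact this hx)
  apply hμ
  rw [eq_bot_iff]
  intro x hx
  exact indep_zero hI hμS hx (htop ▸ Submodule.mem_top)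

theorem WRep.string (R : WRep a e f Wt c) (h2 : ∀ i, a i i = 2) {x : V} {ν : Fin n → ℤ}
    (hx : x ∈ Wt ν) (k : Fin n) (hfx : f k x = 0) (r : ℕ) :
    (e k)^[r] x ∈ Wt (ν + (r : ℤ) • rt a k) ∧
      f k ((e k)^[r + 1] x) = (c k (r + 1) * c k (-ν k - r)) • (e k)^[r] x := by
  induction r with
  | zero =>
    refine ⟨by simpa using hx, ?_⟩
    have h := R.hcomm k k ν x hx
    rw [if_pos rfl, hfx, map_zero, zero_sub] at h
    have h3 := R.cid k (-ν k) 0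
    have h0 : c k 0 = 0 := by
      have := R.codd k 0
      rw [neg_zero] at this
      exact self_eq_neg.1 this
    rw [h0] at h3
    simp only [zero_mul, sub_zero, mul_zero] at h3
    simp only [Function.iterate_succ, Function.iterate_zero, Function.comp_apply, id]
    simp only [Nat.cast_zero, sub_zero]
    rw [h3, R.codd, neg_smul, ← h, neg_neg]
  | succ r ih =>
    obtain ⟨h1, h3⟩ := ih
    have hm : (e k)^[r + 1] x ∈ Wt (ν + ((r + 1 : ℕ) : ℤ) • rt a k) := by
      rw [Function.iterate_succ_apply']
      have := R.he k _ _ h1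
      convert this using 2
      push_cast
      rw [add_smul, one_smul, add_assoc]
    refine ⟨hm, ?_⟩
    rw [Function.iterate_succ_apply' _ (r + 1)]
    have h := R.hcomm k k _ _ hm
    rw [if_pos rfl, h3, map_smul, ← Function.iterate_succ_apply' (e k) r x,
      Nat.succ_eq_add_one] at h
    rw [← sub_sub_cancel ((c k (↑r + 1) * c k (-ν k - ↑r)) • (e k)^[r + 1] x)
      (f k (e k ((e k)^[r + 1] x))), h, ← sub_smul]
    congr 1
    have h4 := R.cid k (-ν k) (r + 1)
    have h5 : (ν + ((r + 1 : ℕ) : ℤ) • rt a k) k = -(-ν k - 2 * (r + 1)) := by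
      simp [rt, h2]
      ring
    have h6 : -ν k - ((r : ℤ) + 1) + 1 = -ν k - r := by ring
    rw [h5, R.codd, ← h4, h6]
    push_cast
    ring

/-- The invariant form, abstractly. -/
structure Form (a : Fin n → Fin n → ℤ) (B : (Fin n → ℤ) →ₗ[ℤ] (Fin n → ℤ) →ₗ[ℤ] ℤ) : Prop where
  symm : ∀ x y, B x y = B y x
  pos : ∀ x, x ≠ 0 → 0 < B x x
  root : ∀ k ν, 2 * B ν (rt a k) = ν k * B (rt a k) (rt a k)

theorem rt_ne (h2 : ∀ i, a i i = 2) (k : Fin n) : rt a k ≠ 0 := fun h => by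
  have := congrFun h k
  simp [rt, h2] at this

theorem Form.norm_add {B} (Bf : Form a B) (h2 : ∀ i, a i i = 2) (ν : Fin n → ℤ) (k : Fin n)
    (h : 0 ≤ ν k) : B ν ν < B (ν + rt a k) (ν + rt a k) := by
  have h1 := Bf.pos _ (rt_ne h2 k)
  have h3 := Bf.root k ν
  have h4 := Bf.symm ν (rt a k)
  simp only [map_add, LinearMap.add_apply]
  have : 0 ≤ ν k * B (rt a k) (rt a k) := mul_nonneg h h1.le
  linarith

theorem Form.norm_sub {B} (Bf : Form a B) (h2 : ∀ i, a i i = 2) (ν : Fin n → ℤ) (k : Fin n)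
    (h : ν k ≤ 0) : B ν ν < B (ν - rt a k) (ν - rt a k) := by
  have h1 := Bf.pos _ (rt_ne h2 k)
  have h3 := Bf.root k ν
  have h4 := Bf.symm ν (rt a k)
  simp only [map_sub, LinearMap.sub_apply]
  have : ν k * B (rt a k) (rt a k) ≤ 0 := mul_nonpos_of_nonpos_of_nonneg h h1.le
  linarith

theorem Form.root_nonneg {B} (Bf : Form a B) (h2 : ∀ i, a i i = 2) (ν : Fin n → ℤ) (k : Fin n)
    (h : 0 ≤ ν k) : 0 ≤ B ν (rt a k) := by
  have h1 := Bf.pos _ (rt_ne h2 k)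
  have h3 := Bf.root k ν
  have : 0 ≤ ν k * B (rt a k) (rt a k) := mul_nonneg h h1.le
  linarith

theorem Form.root_pos {B} (Bf : Form a B) (h2 : ∀ i, a i i = 2) (ν : Fin n → ℤ) (k : Fin n)
    (h : 0 < ν k) : 0 < B ν (rt a k) := by
  have h1 := Bf.pos _ (rt_ne h2 k)
  have h3 := Bf.root k ν
  have : 0 < ν k * B (rt a k) (rt a k) := mul_pos h h1
  linarith

theorem WRep.maxnorm (R : WRep a e f Wt c) (hI : iSupIndep Wt) [FiniteDimensional ℂ V]
    (h2 : ∀ i, a i i = 2) {B} (Bf : Form a B)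
    {v : V} {ϖ : Fin n → ℤ} (hdom : ∀ k, 0 ≤ ϖ k)
    (hv : v ∈ Wt ϖ) (hv0 : v ≠ 0) (hk : ∀ k, e k v = 0) (μ : Fin n → ℤ) (hμ : Wt μ ≠ ⊥) :
    B μ μ ≤ B ϖ ϖ := by
  have hfin : {μ | Wt μ ≠ ⊥}.Finite := WellFoundedGT.finite_ne_bot_of_iSupIndep hI
  obtain ⟨ν₁, hν₁, hmax₁⟩ := Set.exists_max_image _ (fun μ => B μ μ) hfin ⟨μ, hμ⟩
  set T : Set (Fin n → ℤ) := {μ | Wt μ ≠ ⊥ ∧ B μ μ = B ν₁ ν₁} with hT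
  have hTfin : T.Finite := hfin.subset fun μ h => h.1
  obtain ⟨ν, ⟨hν0, hνn⟩, hmax⟩ := Set.exists_max_image T (fun μ => B (fun _ => 1) μ) hTfin
    ⟨ν₁, hν₁, rfl⟩
  have hνdom : ∀ k, 0 ≤ ν k := by
    intro k
    by_contra! hneg
    obtain ⟨x, hx, hx0⟩ := (Submodule.ne_bot_iff _).1 hν0
    have hfx : f k x = 0 := by
      by_contra hne
      have := hmax₁ (ν - rt a k) ((Submodule.ne_bot_iff _).2 ⟨_, R.hf k ν x hx, hne⟩)
      have h' := Bf.norm_sub h2 ν k hneg.le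
      linarith
    have hstr := R.string h2 hx k hfx
    have hne : ∀ r : ℕ, (r : ℤ) ≤ -ν k → (e k)^[r] x ≠ 0 := by
      intro r
      induction r with
      | zero => intro _; simpa using hx0
      | succ r ih =>
        intro hr h0
        push_cast at hr
        have h := (hstr r).2
        rw [h0, map_zero] at h
        have h3 := ih (by linarith)
        rcases smul_eq_zero.1 h.symm with h4 | h4
        · rcases mul_eq_zero.1 h4 with h5 | h5
          · exact R.cne k _ (by positivity) h5
          · exact R.cne k _ (by linarith) h5
        · exact h3 h4
    have hr : (((-ν k).toNat : ℕ) : ℤ) = -ν k := Int.toNat_of_nonneg (by linarith)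
    have hw := (hstr (-ν k).toNat).1
    have hwne := hne (-ν k).toNat hr.le
    rw [hr] at hw
    have h3 := Bf.root k ν
    have h4 := Bf.symm ν (rt a k)
    have hmem : ν + (-ν k) • rt a k ∈ T := by
      refine ⟨(Submodule.ne_bot_iff _).2 ⟨_, hw, hwne⟩, ?_⟩
      rw [← hνn]
      simp only [map_add, map_smul, LinearMap.add_apply, LinearMap.smul_apply, smul_eq_mul]
      rw [← h4]
      linear_combination (-ν k) * h3
    have h5 := hmax _ hmem
    have h6 := Bf.root_pos h2 (fun _ => 1) k (by norm_num)
    simp only [map_add, map_smul, smul_eq_mul] at h5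
    nlinarith
  have hS := R.wts hI hv hv0 hk {μ | ∀ δ : Fin n → ℤ, (∀ k, 0 ≤ δ k) → B δ μ ≤ B δ ϖ}
    (fun _ _ => le_rfl) (by
      intro k μ hμ δ hδ
      have := hμ δ hδ
      have h' := Bf.root_nonneg h2 δ k (hδ k)
      rw [map_sub]
      linarith) ν hν0
  have h1 := hS ν hνdom
  have h3 := hS ϖ hdom
  have h4 := Bf.symm ν ϖ
  have h5 := hmax₁ μ hμ
  linarith

theorem exists_form (W : Type) [Group W] [Finite W]
    (σ : W →* Multiplicative (AddAut (Fin n → ℤ))) (h2 : ∀ i, a i i = 2)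
    (s : Fin n → W) (hs : ∀ i (μ : Fin n → ℤ), σ (s i) μ = fun k => μ k - μ i * a k i) :
    ∃ B : (Fin n → ℤ) →ₗ[ℤ] (Fin n → ℤ) →ₗ[ℤ] ℤ, Form a B ∧
      ∀ w x y, B (σ w x) (σ w y) = B x y := by
  classical
  have := Fintype.ofFinite W
  have hadd : ∀ w x y, σ w (x + y) = σ w x + σ w y := fun w x y =>
    (Multiplicative.toAdd (σ w)).map_add x y
  have hsm : ∀ w (t : ℤ) x, σ w (t • x) = t • σ w x := fun w t x =>
    map_zsmul (Multiplicative.toAdd (σ w)) t x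
  have hmul : ∀ w w' x, σ (w * w') x = σ w (σ w' x) := fun w w' x => by rw [map_mul]; rfl
  have hone : ∀ x, σ 1 x = x := fun x => by rw [map_one]; rfl
  let B : (Fin n → ℤ) →ₗ[ℤ] (Fin n → ℤ) →ₗ[ℤ] ℤ := LinearMap.mk₂ ℤ
    (fun x y => ∑ w : W, ∑ i, σ w x i * σ w y i)
    (by intro x x' y; simp [hadd, add_mul, Finset.sum_add_distrib])
    (by intro t x y; simp only [hsm, Pi.smul_apply, smul_eq_mul, mul_assoc, Finset.mul_sum])
    (by intro x y y'; simp [hadd, mul_add, Finset.sum_add_distrib])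
    (by intro t x y; simp only [hsm, Pi.smul_apply, smul_eq_mul, mul_left_comm, Finset.mul_sum])
  have hB : ∀ x y, B x y = ∑ w : W, ∑ i, σ w x i * σ w y i := fun x y => rfl
  have hinv : ∀ w x y, B (σ w x) (σ w y) = B x y := by
    intro w x y
    rw [hB, hB]
    simp only [← hmul]
    exact Fintype.sum_equiv (Equiv.mulRight w) _ _ (fun _ => rfl)
  have hrs : ∀ k (μ : Fin n → ℤ), σ (s k) μ = μ - μ k • rt a k := by
    intro k μ
    rw [hs]
    ext i
    simp [rt]
  refine ⟨B, ⟨?_, ?_, ?_⟩, hinv⟩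
  · intro x y
    rw [hB, hB]
    simp only [mul_comm]
  · intro x hx
    rw [hB]
    have hnn : ∀ w ∈ Finset.univ, 0 ≤ ∑ i, σ w x i * σ w x i := fun w _ =>
      Finset.sum_nonneg fun i _ => mul_self_nonneg _
    refine Finset.sum_pos' hnn ⟨1, Finset.mem_univ _, ?_⟩
    rw [hone]
    obtain ⟨i, hi⟩ := Function.ne_iff.1 hx
    exact Finset.sum_pos' (fun i _ => mul_self_nonneg _)
      ⟨i, Finset.mem_univ _, mul_self_pos.2 hi⟩
  · intro k ν
    have h := hinv (s k) ν (rt a k)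
    have h3 : (rt a k) k = 2 := h2 k
    rw [hrs, hrs, h3] at h
    simp only [map_sub, map_smul, LinearMap.sub_apply, LinearMap.smul_apply, smul_eq_mul] at h
    linarith

/-- If `w₀` maps dominant weights to antidominant ones then `w₀ ϖ_j = -ϖ_k` for some `k`. -/
theorem w0_perm (hn : 0 < n) (W : Type) [Group W] [Finite W]
    (σ : W →* Multiplicative (AddAut (Fin n → ℤ))) (w₀ : W)
    (hw₀ : ∀ μ : Fin n → ℤ, (∀ i, 0 ≤ μ i) → ∀ i, σ w₀ μ i ≤ 0) (j : Fin n) :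
    ∃ k, σ w₀ (Pi.single j 1) = - Pi.single k 1 := by
  classical
  have hadd : ∀ w x y, σ w (x + y) = σ w x + σ w y := fun w x y =>
    (Multiplicative.toAdd (σ w)).map_add x y
  have hneg : ∀ w x, σ w (-x) = - σ w x := fun w x =>
    map_neg (Multiplicative.toAdd (σ w)) x
  have hzero : ∀ w, σ w 0 = 0 := fun w => map_zero (Multiplicative.toAdd (σ w))
  have hmul : ∀ w w' x, σ (w * w') x = σ w (σ w' x) := fun w w' x => by rw [map_mul]; rfl
  have hone : ∀ x, σ 1 x = x := fun x => by rw [map_one]; rfl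
  have hstep : ∀ r : ℕ, ∀ μ : Fin n → ℤ, (∀ i, 0 ≤ μ i) →
      ∀ i, 0 ≤ (-1) ^ r * σ (w₀ ^ r) μ i := by
    intro r
    induction r with
    | zero => intro μ hμ i; simpa [hone] using hμ i
    | succ r ih =>
      intro μ hμ i
      have h := ih (- σ w₀ μ) (fun i => by simpa using hw₀ μ hμ i) i
      rw [hneg, ← hmul, ← pow_succ] at h
      rw [pow_succ]
      simpa using h
  have hinvneg : ∀ μ : Fin n → ℤ, (∀ i, 0 ≤ μ i) → ∀ i, σ w₀⁻¹ μ i ≤ 0 := by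
    intro μ hμ i
    have hm : 0 < orderOf w₀ := orderOf_pos w₀
    have h := hstep (2 * orderOf w₀ - 1) μ hμ i
    have h3 : w₀ ^ (2 * orderOf w₀ - 1) = w₀⁻¹ := by
      rw [eq_inv_iff_mul_eq_one, ← pow_succ, Nat.sub_add_cancel (by omega), mul_comm, pow_mul,
        pow_orderOf_eq_one, one_pow]
    have h4 : Odd (2 * orderOf w₀ - 1) := ⟨orderOf w₀ - 1, by omega⟩
    rw [h3, h4.neg_one_pow] at h
    linarith
  set p : Fin n → ℤ := - σ w₀ (Pi.single j 1) with hp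
  have hsn : ∀ k : Fin n, ∀ i, 0 ≤ (Pi.single k 1 : Fin n → ℤ) i := by
    intro k i
    by_cases h : i = k
    · subst h; simp
    · simp [h]
  have hpn : ∀ i, 0 ≤ p i := fun i => by
    have := hw₀ _ (hsn j) i
    simp only [hp, Pi.neg_apply]
    linarith
  have hback : σ w₀⁻¹ p = - Pi.single j 1 := by
    rw [hp, hneg, ← hmul, inv_mul_cancel, hone]
  have hp0 : p ≠ 0 := by
    intro h
    rw [h, hzero] at hback
    have := congrFun hback j
    simp at this
  obtain ⟨k, hk⟩ := Function.ne_iff.1 hp0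
  have hk1 : 1 ≤ p k := by
    have := hpn k
    simp only [Pi.zero_apply] at hk
    omega
  refine ⟨k, ?_⟩
  have hy : ∀ i, 0 ≤ (p - (Pi.single k 1 : Fin n → ℤ)) i := by
    intro i
    by_cases h : i = k
    · subst h; simpa using hk1
    · simpa [h] using hpn i
  have hsum : σ w₀⁻¹ (p - Pi.single k 1) + σ w₀⁻¹ (Pi.single k 1) = - Pi.single j 1 := by
    rw [← hadd, sub_add_cancel, hback]
  have hy' := hinvneg _ hy
  have hz' := hinvneg _ (hsn k)
  have hzoff : ∀ i, i ≠ j → σ w₀⁻¹ (Pi.single k 1) i = 0 := by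
    intro i hi
    have h := congrFun hsum i
    have h1 := hy' i
    have h3 := hz' i
    rw [Pi.add_apply, Pi.neg_apply, Pi.single_eq_of_ne hi] at h
    linarith
  have hzne : σ w₀⁻¹ (Pi.single k 1) ≠ 0 := by
    intro h
    have h1 := congrArg (fun x => σ w₀ x) h
    simp only [← hmul, mul_inv_cancel, hone, hzero] at h1
    have := congrFun h1 k
    simp at this
  have hzj : σ w₀⁻¹ (Pi.single k 1) j = -1 := by
    have h := congrFun hsum j
    have h1 := hy' j
    have h3 := hz' j
    have h4 : σ w₀⁻¹ (Pi.single k 1) j ≠ 0 := by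
      intro h4
      apply hzne
      ext i
      by_cases hi : i = j
      · rw [hi]; exact h4
      · exact hzoff i hi
    rw [Pi.add_apply, Pi.neg_apply, Pi.single_eq_same] at h
    omega
  have hz : σ w₀⁻¹ (Pi.single k 1) = - Pi.single j 1 := by
    ext i
    by_cases hi : i = j
    · subst hi; simpa using hzj
    · simpa [hi] using hzoff i hi
  have h1 := congrArg (fun x => σ w₀ x) hz
  simp only [← hmul, mul_inv_cancel, hone, hneg] at h1
  rw [h1, neg_neg]

theorem Form.ext {B} (Bf : Form a B) (x y : Fin n → ℤ)
    (h : ∀ m, B x (Pi.single m 1) = B y (Pi.single m 1)) : x = y := by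
  have hxy : B x = B y := by
    refine LinearMap.pi_ext' fun m => LinearMap.ext_ring ?_
    simpa using h m
  by_contra hne
  have := Bf.pos (x - y) (sub_ne_zero.2 hne)
  rw [B.map_sub, hxy, sub_self] at this
  simp at this

theorem w0_root (hn : 0 < n) (W : Type) [Group W] [Finite W]
    (σ : W →* Multiplicative (AddAut (Fin n → ℤ))) (h2 : ∀ i, a i i = 2)
    {B} (Bf : Form a B) (hinv : ∀ w x y, B (σ w x) (σ w y) = B x y) (w₀ : W)
    (hw₀ : ∀ μ : Fin n → ℤ, (∀ i, 0 ≤ μ i) → ∀ i, σ w₀ μ i ≤ 0) (j k : Fin n)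
    (hjk : σ w₀ (Pi.single j 1) = - Pi.single k 1) :
    σ w₀ (rt a j) = - rt a k := by
  classical
  have hzs : ∀ w (t : ℤ) x, σ w (t • x) = t • σ w x := fun w t x =>
    map_zsmul (Multiplicative.toAdd (σ w)) t x
  have hadd : ∀ w x y, σ w (x + y) = σ w x + σ w y := fun w x y =>
    (Multiplicative.toAdd (σ w)).map_add x y
  have hmul : ∀ w w' x, σ (w * w') x = σ w (σ w' x) := fun w w' x => by rw [map_mul]; rfl
  have hone : ∀ x, σ 1 x = x := fun x => by rw [map_one]; rfl
  have hinj : ∀ w x y, σ w x = σ w y → x = y := by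
    intro w x y h
    have h1 := congrArg (fun x => σ w⁻¹ x) h
    simpa only [← hmul, inv_mul_cancel, hone] using h1
  choose π hπ using w0_perm hn W σ w₀ hw₀
  have hneginj : ∀ l m : Fin n, (-Pi.single l 1 : Fin n → ℤ) = - Pi.single m 1 → l = m := by
    intro l m h
    by_contra hlm
    have := congrFun h l
    simp [hlm] at this
  have hπinj : Function.Injective π := by
    intro l m h
    have h1 : σ w₀ (Pi.single l 1) = σ w₀ (Pi.single m 1) := by rw [hπ, hπ, h]
    have h3 := hinj _ _ _ h1
    exact hneginj l m (by rw [h3])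
  have hπsurj : Function.Surjective π := Finite.surjective_of_injective hπinj
  have hπj : π j = k := hneginj _ _ (by rw [← hπ, hjk])
  set cj := B (rt a j) (rt a j) with hcj
  set ck := B (rt a k) (rt a k) with hck
  have hcjp : 0 < cj := Bf.pos _ (rt_ne h2 j)
  have hckp : 0 < ck := Bf.pos _ (rt_ne h2 k)
  have key : ck • σ w₀ (rt a j) = - (cj • rt a k) := by
    apply Bf.ext
    intro m
    obtain ⟨l, rfl⟩ := hπsurj m
    have e1 : (Pi.single (π l) 1 : Fin n → ℤ) = - σ w₀ (Pi.single l 1) := by rw [hπ, neg_neg]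
    have h1 : 2 * B (σ w₀ (rt a j)) (Pi.single (π l) 1) = - ((Pi.single l 1 : Fin n → ℤ) j * cj) := by
      rw [e1, map_neg, hinv, Bf.symm, hcj, ← Bf.root]
      ring
    have h3 : 2 * B (rt a k) (Pi.single (π l) 1) = (Pi.single (π l) 1 : Fin n → ℤ) k * ck := by
      rw [Bf.symm, hck, ← Bf.root]
    have h4 : (Pi.single (π l) 1 : Fin n → ℤ) k = (Pi.single l 1 : Fin n → ℤ) j := by
      rw [← hπj]
      simp [Pi.single_apply, hπinj.eq_iff]
    rw [h4] at h3
    simp only [map_smul, map_neg, LinearMap.neg_apply, LinearMap.smul_apply, smul_eq_mul]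
    have h5 : 2 * (ck * B (σ w₀ (rt a j)) (Pi.single (π l) 1)) =
      2 * (-(cj * B (rt a k) (Pi.single (π l) 1))) := by
      linear_combination ck * h1 + cj * h3
    linarith
  have hnorm : ck * ck * cj = cj * cj * ck := by
    have h1 : B (ck • σ w₀ (rt a j)) (ck • σ w₀ (rt a j)) =
      B (- (cj • rt a k)) (- (cj • rt a k)) := by rw [key]
    simp only [map_smul, map_neg, LinearMap.neg_apply, LinearMap.smul_apply, smul_eq_mul,
      hinv] at h1
    rw [← hcj, ← hck] at h1
    linarith
  have hcc : ck = cj := by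
    have : (ck * cj) * (ck - cj) = 0 := by linear_combination hnorm
    rcases mul_eq_zero.1 this with h | h
    · exact absurd h (mul_pos hckp hcjp).ne'
    · linarith
  rw [hcc] at key
  ext m
  have := congrFun key m
  simp only [Pi.smul_apply, Pi.neg_apply, smul_eq_mul] at this ⊢
  have h3 : cj * (σ w₀ (rt a j) m + rt a k m) = 0 := by linarith
  rcases mul_eq_zero.1 h3 with h | h
  · exact absurd h hcjp.ne'
  · linarith

end DemAux

namespace DemAux

theorem q_facts {q : ℂ} (hq : Transcendental ℚ q) : q ≠ 0 ∧ ∀ m : ℤ, q ^ m = 1 → m = 0 := by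
  refine ⟨fun h => hq (h ▸ isAlgebraic_zero), ?_⟩
  have key : ∀ m : ℕ, q ^ m = 1 → m = 0 := by
    intro m hm
    by_contra h0
    apply hq
    have : IsIntegral ℚ q := IsIntegral.of_pow (Nat.pos_of_ne_zero h0) (hm ▸ isIntegral_one)
    exact this.isAlgebraic
  intro m hm
  obtain ⟨r, rfl | rfl⟩ := Int.eq_nat_or_neg m
  · rw [zpow_natCast] at hm
    simpa using key r hm
  · rw [zpow_neg, zpow_natCast, inv_eq_one] at hm
    simpa using key r hm

/-- The quantum integer at `t`. -/
noncomputable def qn (t : ℂ) (m : ℤ) : ℂ := (t - t⁻¹)⁻¹ * (t ^ m - (t ^ m)⁻¹)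

theorem mem_wtSp {q : ℂ} {n : ℕ} {d : Fin n → ℕ}
    {U : Type} [Ring U] [Algebra ℂ U] {K : Fin n → Uˣ}
    {Vc : Type} [AddCommGroup Vc] [Module ℂ Vc] {ρ : U →ₐ[ℂ] Module.End ℂ Vc}
    {μ : Fin n → ℤ} {x : Vc} :
    x ∈ wtSp q d K ρ μ ↔ ∀ i, ρ (K i : U) x = (q ^ (μ i * (d i : ℤ))) • x := by
  simp [wtSp, Submodule.mem_iInf, sub_eq_zero]

theorem gen_top (q : ℂ) {n : ℕ} (a : Fin n → Fin n → ℤ) (d : Fin n → ℕ)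
    (U : Type) [Ring U] [Algebra ℂ U]
    (E F : Fin n → U) (K : Fin n → Uˣ)
    (hrel : UqRels q a d U E F K)
    (hUuniv : ∀ (B : Type) [Ring B] [Algebra ℂ B] (E' F' : Fin n → B) (K' : Fin n → Bˣ),
      UqRels q a d B E' F' K' → ∃! φ : U →ₐ[ℂ] B,
        (∀ i, φ (E i) = E' i) ∧ (∀ i, φ (F i) = F' i) ∧ (∀ i, φ (K i : U) = (K' i : B)))
    (A : Subalgebra ℂ U) (hE : ∀ i, E i ∈ A) (hF : ∀ i, F i ∈ A) (hK : ∀ i, (K i : U) ∈ A)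
    (hK' : ∀ i, (((K i)⁻¹ : Uˣ) : U) ∈ A) (u : U) : u ∈ A := by
  let E' : Fin n → A := fun i => ⟨E i, hE i⟩
  let F' : Fin n → A := fun i => ⟨F i, hF i⟩
  let K' : Fin n → Aˣ := fun i => ⟨⟨K i, hK i⟩, ⟨_, hK' i⟩, by ext; simp, by ext; simp⟩
  have hr : UqRels q a d A E' F' K' := by
    obtain ⟨h1, h2, h3, h4, h5, h6⟩ := hrel
    refine ⟨?_, ?_, ?_, ?_, ?_, ?_⟩
    · intro i j; ext; simpa [E', F', K'] using h1 i j
    · intro i j; ext; simpa [E', F', K'] using h2 i j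
    · intro i j; ext; simpa [E', F', K'] using h3 i j
    · intro i j
      have := h4 i j
      by_cases hij : i = j
      · rw [if_pos hij] at this ⊢
        ext
        exact this
      · rw [if_neg hij] at this ⊢
        ext
        exact this
    · intro i j hij
      apply Subtype.ext
      have := h5 i j hij
      simpa [E', F', K'] using this
    · intro i j hij
      apply Subtype.ext
      have := h6 i j hij
      simpa [E', F', K'] using this
  obtain ⟨φ, ⟨hφ1, hφ2, hφ3⟩, _⟩ := hUuniv A E' F' K' hr
  obtain ⟨ψ, _, hψ⟩ := hUuniv U E F K hrel
  have e1 := hψ (A.val.comp φ) ⟨fun i => by simp [hφ1, E'], fun i => by simp [hφ2, F'],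
    fun i => by simp [hφ3, K']⟩
  have e2 := hψ (AlgHom.id ℂ U) ⟨fun i => rfl, fun i => rfl, fun i => rfl⟩
  have h := congrArg (fun g : U →ₐ[ℂ] U => g u) (e1.trans e2.symm)
  simp only [AlgHom.comp_apply, AlgHom.id_apply] at h
  rw [← h]
  exact (φ u).2

theorem mkRep (q : ℂ) (hq : Transcendental ℚ q) {n : ℕ} (a : Fin n → Fin n → ℤ) (d : Fin n → ℕ)
    (hd_pos : ∀ i, 0 < d i)
    (U : Type) [Ring U] [Algebra ℂ U]
    (E F : Fin n → U) (K : Fin n → Uˣ)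
    (hrel : UqRels q a d U E F K)
    (hUuniv : ∀ (B : Type) [Ring B] [Algebra ℂ B] (E' F' : Fin n → B) (K' : Fin n → Bˣ),
      UqRels q a d B E' F' K' → ∃! φ : U →ₐ[ℂ] B,
        (∀ i, φ (E i) = E' i) ∧ (∀ i, φ (F i) = F' i) ∧ (∀ i, φ (K i : U) = (K' i : B)))
    (V : Type) [AddCommGroup V] [Module ℂ V] (ρ : U →ₐ[ℂ] Module.End ℂ V)
    (hsimple : ∀ (N : Submodule ℂ V), (∀ (u : U), ∀ v ∈ N, ρ u v ∈ N) → N = ⊥ ∨ N = ⊤) :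
    WRep a (fun k => ρ (E k)) (fun k => ρ (F k)) (wtSp q d K ρ)
      (fun i m => qn (q ^ (d i : ℤ)) m) := by
  obtain ⟨hq0, hq1⟩ := q_facts hq
  have ht0 : ∀ i, q ^ (d i : ℤ) ≠ 0 := fun i => zpow_ne_zero _ hq0
  have ht1 : ∀ i (m : ℤ), m ≠ 0 → (q ^ (d i : ℤ)) ^ m - ((q ^ (d i : ℤ)) ^ m)⁻¹ ≠ 0 := by
    intro i m hm h
    have hne : (q ^ (d i : ℤ)) ^ m ≠ 0 := zpow_ne_zero _ (ht0 i)
    replace h : (q ^ (d i : ℤ)) ^ m * (q ^ (d i : ℤ)) ^ m = 1 := by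
      nth_rewrite 2 [sub_eq_zero.1 h]
      exact mul_inv_cancel₀ hne
    rw [← zpow_mul, ← zpow_add₀ hq0] at h
    have h3 := hq1 _ h
    have := hd_pos i
    have h4 : (d i : ℤ) * m ≠ 0 := mul_ne_zero (by positivity) hm
    omega
  have ht2 : ∀ i, q ^ (d i : ℤ) - (q ^ (d i : ℤ))⁻¹ ≠ 0 := fun i => by
    simpa using ht1 i 1 one_ne_zero
  have hKinv : ∀ i μ x, x ∈ wtSp q d K ρ μ →
      ρ (((K i)⁻¹ : Uˣ) : U) x = (q ^ (μ i * (d i : ℤ)))⁻¹ • x := by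
    intro i μ x hx
    have h := mem_wtSp.1 hx i
    have h3 := congrArg (ρ (((K i)⁻¹ : Uˣ) : U)) h
    rw [← Module.End.mul_apply, ← map_mul, Units.inv_mul, map_one, Module.End.one_apply,
      map_smul] at h3
    conv_rhs => rw [h3]
    rw [smul_smul, inv_mul_cancel₀ (zpow_ne_zero _ hq0), one_smul]
  refine ⟨?_, ?_, ?_, ?_, ?_, ?_, ?_⟩
  · intro k μ x hx
    rw [mem_wtSp] at hx ⊢
    intro i
    rw [← Module.End.mul_apply, ← map_mul, hrel.2.1 i k, map_smul, map_mul, LinearMap.smul_apply,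
      Module.End.mul_apply, hx i, map_smul, smul_smul, ← zpow_add₀ hq0]
    congr 2
    simp only [rt, Pi.add_apply]
    ring
  · intro k μ x hx
    rw [mem_wtSp] at hx ⊢
    intro i
    rw [← Module.End.mul_apply, ← map_mul, hrel.2.2.1 i k, map_smul, map_mul, LinearMap.smul_apply,
      Module.End.mul_apply, hx i, map_smul, smul_smul, ← zpow_add₀ hq0]
    congr 2
    simp only [rt, Pi.sub_apply]
    ring
  · intro i j μ x hx
    have h := congrArg (fun y => ρ y x) (hrel.2.2.2.1 i j)
    simp only [map_sub, map_mul, LinearMap.sub_apply, Module.End.mul_apply] at h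
    rw [h]
    by_cases hij : i = j
    · rw [if_pos hij, if_pos hij, map_smul, map_sub, LinearMap.smul_apply, LinearMap.sub_apply,
        hKinv i μ x hx, mem_wtSp.1 hx i, ← sub_smul, smul_smul]
      congr 1
      rw [qn, ← zpow_mul, mul_comm (μ i), zpow_neg]
    · rw [if_neg hij, if_neg hij, map_zero, LinearMap.zero_apply]
  · intro S hS he hf
    apply hsimple
    have hlift : ∀ y : U, (∀ x ∈ S, ρ y x ∈ Submodule.span ℂ S) →
        ∀ v ∈ Submodule.span ℂ S, ρ y v ∈ Submodule.span ℂ S := by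
      intro y hy v hv
      have : Submodule.span ℂ S ≤ (Submodule.span ℂ S).comap (ρ y) :=
        Submodule.span_le.2 fun z hz => hy z hz
      exact this hv
    let A : Subalgebra ℂ U :=
      { carrier := {u | ∀ v ∈ Submodule.span ℂ S, ρ u v ∈ Submodule.span ℂ S}
        mul_mem' := by
          intro x y hx hy v hv
          rw [map_mul]
          exact hx _ (hy v hv)
        add_mem' := by
          intro x y hx hy v hv
          rw [map_add]
          exact Submodule.add_mem _ (hx v hv) (hy v hv)
        algebraMap_mem' := by
          intro r v hv
          rw [AlgHom.commutes, Module.algebraMap_end_apply]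
          exact Submodule.smul_mem _ _ hv }
    intro u
    exact gen_top q a d U E F K hrel hUuniv A (fun i => hlift _ (he i)) (fun i => hlift _ (hf i))
      (fun i => hlift _ (fun x hx => by
        obtain ⟨μ, hμ⟩ := hS x hx
        rw [mem_wtSp.1 hμ i]
        exact Submodule.smul_mem _ _ (Submodule.subset_span hx)))
      (fun i => hlift _ (fun x hx => by
        obtain ⟨μ, hμ⟩ := hS x hx
        rw [hKinv i μ x hμ]
        exact Submodule.smul_mem _ _ (Submodule.subset_span hx))) u
  · intro i m
    simp only [qn, zpow_neg, inv_inv]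
    ring
  · intro i m hm
    exact mul_ne_zero (inv_ne_zero (ht2 i)) (ht1 i m hm)
  · intro i m r
    have h0 := ht0 i
    have h1 := ht2 i
    simp only [qn]
    generalize q ^ (d i : ℤ) = t at h0 h1
    have e1 : t ^ (r + 1) = t ^ r * t := by rw [zpow_add₀ h0, zpow_one]
    have e2 : t ^ (m - r) = t ^ m * (t ^ r)⁻¹ := by rw [zpow_sub₀ h0, div_eq_mul_inv]
    have e3 : t ^ (m - r + 1) = t ^ m * (t ^ r)⁻¹ * t := by rw [zpow_add₀ h0, zpow_one, e2]
    have e4 : t ^ (m - 2 * r) = t ^ m * (t ^ r)⁻¹ * (t ^ r)⁻¹ := by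
      rw [show m - 2 * r = m - r - r by ring, zpow_sub₀ h0, e2, div_eq_mul_inv]
    rw [e1, e2, e3, e4]
    have hX : t ^ r ≠ 0 := zpow_ne_zero _ h0
    have hY : t ^ m ≠ 0 := zpow_ne_zero _ h0
    generalize t ^ r = X at hX
    generalize t ^ m = Y at hY
    have key : (X * t - (X * t)⁻¹) * (Y * X⁻¹ - (Y * X⁻¹)⁻¹)
        - (X - X⁻¹) * (Y * X⁻¹ * t - (Y * X⁻¹ * t)⁻¹)
        = (t - t⁻¹) * (Y * X⁻¹ * X⁻¹ - (Y * X⁻¹ * X⁻¹)⁻¹) := by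
      field_simp
      ring
    have h7 : (t - t⁻¹)⁻¹ * (t - t⁻¹) = 1 := inv_mul_cancel₀ h1
    linear_combination (t - t⁻¹)⁻¹ * (t - t⁻¹)⁻¹ * key +
      (t - t⁻¹)⁻¹ * (Y * X⁻¹ * X⁻¹ - (Y * X⁻¹ * X⁻¹)⁻¹) * h7

theorem wt_indep (q : ℂ) (hq : Transcendental ℚ q) {n : ℕ} (d : Fin n → ℕ)
    (hd_pos : ∀ i, 0 < d i) (U : Type) [Ring U] [Algebra ℂ U] (K : Fin n → Uˣ)
    (hK : ∀ i j, (K i : U) * (K j : U) = (K j : U) * (K i : U))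
    (V : Type) [AddCommGroup V] [Module ℂ V] (ρ : U →ₐ[ℂ] Module.End ℂ V) :
    iSupIndep (wtSp q d K ρ) := by
  obtain ⟨hq0, hq1⟩ := q_facts hq
  have hc : ∀ i j, Commute (ρ (K j : U)) (ρ (K i : U)) := fun i j => by
    rw [commute_iff_eq, ← map_mul, ← map_mul, hK]
  have h : iSupIndep fun χ : Fin n → ℂ => ⨅ i, (ρ (K i : U)).maxGenEigenspace (χ i) :=
    Module.End.independent_iInf_maxGenEigenspace_of_forall_mapsTo
      (fun i => ρ (K i : U))
      (fun i j φ => Module.End.mapsTo_maxGenEigenspace_of_comm (hc i j) φ)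
  have hinj : Function.Injective
      (fun μ : Fin n → ℤ => fun i : Fin n => q ^ (μ i * (d i : ℤ))) := by
    intro μ ν h
    ext i
    have h1 := congrFun h i
    simp only at h1
    have h2 : q ^ (μ i * (d i : ℤ) - ν i * (d i : ℤ)) = 1 := by
      rw [zpow_sub₀ hq0, h1, div_self (zpow_ne_zero _ hq0)]
    have h3 := hq1 _ h2
    have h4 : (μ i - ν i) * (d i : ℤ) = 0 := by linarith
    have h5 := hd_pos i
    rcases mul_eq_zero.1 h4 with h6 | h6
    · linarith
    · omega
  have h' : iSupIndep fun μ : Fin n → ℤ =>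
      ⨅ i, (ρ (K i : U)).maxGenEigenspace (q ^ (μ i * (d i : ℤ))) := h.comp hinj
  refine iSupIndep.mono h' ?_
  intro μ
  refine iInf_mono fun i => ?_
  intro x hx
  have hx' : ρ (K i : U) x = (q ^ (μ i * (d i : ℤ))) • x := by
    simpa [sub_eq_zero] using hx
  exact Module.End.mem_maxGenEigenspace _ _ _ |>.2 ⟨1, by
    simpa [Module.End.mem_eigenspace_iff, sub_eq_zero] using hx'⟩

section Dem

variable {n : ℕ} {U : Type} [Ring U] [Algebra ℂ U] {E : Fin n → U}
  {V : Type} [AddCommGroup V] [Module ℂ V] {ρ : U →ₐ[ℂ] Module.End ℂ V}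

theorem dem_mem (u : V) : u ∈ Submodule.span ℂ
    {x | ∃ y ∈ Algebra.adjoin ℂ (Set.range E), x = ρ y u} :=
  Submodule.subset_span ⟨1, one_mem _, by simp⟩

theorem dem_stable (u : V) (k : Fin n) (x : V) (hx : x ∈ Submodule.span ℂ
    {x | ∃ y ∈ Algebra.adjoin ℂ (Set.range E), x = ρ y u}) :
    ρ (E k) x ∈ Submodule.span ℂ {x | ∃ y ∈ Algebra.adjoin ℂ (Set.range E), x = ρ y u} := by
  have : Submodule.span ℂ {x | ∃ y ∈ Algebra.adjoin ℂ (Set.range E), x = ρ y u} ≤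
      (Submodule.span ℂ {x | ∃ y ∈ Algebra.adjoin ℂ (Set.range E), x = ρ y u}).comap
        (ρ (E k)) := by
    refine Submodule.span_le.2 ?_
    rintro _ ⟨y, hy, rfl⟩
    exact Submodule.subset_span ⟨E k * y, mul_mem (Algebra.subset_adjoin ⟨k, rfl⟩) hy, by
      rw [map_mul]; rfl⟩
  exact this hx

theorem dem_le (u : V) (N : Submodule ℂ V) (hu : u ∈ N) (hN : ∀ k, ∀ x ∈ N, ρ (E k) x ∈ N) :
    Submodule.span ℂ {x | ∃ y ∈ Algebra.adjoin ℂ (Set.range E), x = ρ y u} ≤ N := by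
  refine Submodule.span_le.2 ?_
  rintro _ ⟨y, hy, rfl⟩
  have : ∀ v ∈ N, ρ y v ∈ N := by
    induction hy using Algebra.adjoin_induction with
    | mem x hx =>
      obtain ⟨k, rfl⟩ := hx
      exact hN k
    | algebraMap r =>
      intro v hv
      rw [AlgHom.commutes, Module.algebraMap_end_apply]
      exact Submodule.smul_mem _ _ hv
    | add x y _ _ hx hy =>
      intro v hv
      rw [map_add]
      exact Submodule.add_mem _ (hx v hv) (hy v hv)
    | mul x y _ _ hx hy =>
      intro v hv
      rw [map_mul]
      exact hx _ (hy v hv)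
  exact this u hu

end Dem

end DemAux

theorem demazure_plus_w0si
    -- the deformation parameter: a transcendental complex number
    (q : ℂ) (hq : Transcendental ℚ q)
    -- Cartan data of the complex semisimple Lie algebra 𝔤 of rank n
    (n : ℕ) (hn : 0 < n) (a : Fin n → Fin n → ℤ) (d : Fin n → ℕ)
    (ha_diag : ∀ i, a i i = 2) (ha_off : ∀ i j, i ≠ j → a i j ≤ 0)
    (ha_zero : ∀ i j, a i j = 0 ↔ a j i = 0)
    (hd_pos : ∀ i, 0 < d i)
    (ha_symm : ∀ i j, (d i : ℤ) * a i j = (d j : ℤ) * a j i)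
    -- the quantised enveloping algebra U = U_q(𝔤): carries elements E i, F i and units K i
    -- satisfying the defining relations, and is universal for these relations
    (U : Type) [Ring U] [Algebra ℂ U]
    (E F : Fin n → U) (K : Fin n → Uˣ)
    (hrel : UqRels q a d U E F K)
    (hUuniv : ∀ (B : Type) [Ring B] [Algebra ℂ B] (E' F' : Fin n → B) (K' : Fin n → Bˣ),
      UqRels q a d B E' F' K' → ∃! φ : U →ₐ[ℂ] B,
        (∀ i, φ (E i) = E' i) ∧ (∀ i, φ (F i) = F' i) ∧ (∀ i, φ (K i : U) = (K' i : B)))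
    -- the Weyl group W, acting faithfully on the weight lattice P = ℤⁿ (coordinates taken in
    -- the basis of fundamental weights ϖ i), generated by the simple reflections s i, with
    -- longest element w₀ (characterised by: w₀ maps dominant weights to antidominant ones)
    (W : Type) [Group W] [Finite W] (σ : W →* Multiplicative (AddAut (Fin n → ℤ)))
    (hσinj : Function.Injective σ)
    (s : Fin n → W) (hsgen : Subgroup.closure (Set.range s) = ⊤)
    (hs : ∀ i (μ : Fin n → ℤ), σ (s i) μ = fun k => μ k - μ i * a k i)
    (w₀ : W) (hw₀ : ∀ μ : Fin n → ℤ, (∀ i, 0 ≤ μ i) → ∀ i, σ w₀ μ i ≤ 0)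
    -- the simple finite-dimensional modules V(λ) of highest weight λ = ∑ c i ϖ i ∈ P⁺
    (V : (Fin n → ℕ) → Type) [∀ c, AddCommGroup (V c)] [∀ c, Module ℂ (V c)]
    (ρ : ∀ c, U →ₐ[ℂ] Module.End ℂ (V c))
    (hfd : ∀ c, FiniteDimensional ℂ (V c))
    (hsimple : ∀ c (N : Submodule ℂ (V c)), (∀ (u : U), ∀ v ∈ N, ρ c u v ∈ N) → N = ⊥ ∨ N = ⊤)
    (hhw : ∀ c, ∃ v : V c, v ≠ 0 ∧ v ∈ wtSp q d K (ρ c) (fun i => (c i : ℤ)) ∧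
      ∀ i, ρ c (E i) v = 0)
    (hwtsum : ∀ c, (⨆ μ : Fin n → ℤ, wtSp q d K (ρ c) μ) = ⊤)
    (hextremal : ∀ c (w : W),
      Module.finrank ℂ (wtSp q d K (ρ c) (σ w (fun i => (c i : ℤ)))) = 1) :
    -- V⁺_{w₀ s_i}(ϖ_j) equals V(ϖ_j) when i ≠ j, and equals the (direct) sum of all
    -- weight spaces of V(ϖ_j) except the lowest one when i = j
    ∀ i j : Fin n, ∀ u : V (Pi.single j 1),
      u ∈ wtSp q d K (ρ (Pi.single j 1)) (σ (w₀ * s i) (fun k => ((Pi.single j 1 : Fin n → ℕ) k : ℤ))) → u ≠ 0 →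
      (i ≠ j → Submodule.span ℂ
          {x | ∃ y ∈ Algebra.adjoin ℂ (Set.range E), x = ρ (Pi.single j 1) y u} = ⊤) ∧
      (i = j → Submodule.span ℂ
          {x | ∃ y ∈ Algebra.adjoin ℂ (Set.range E), x = ρ (Pi.single j 1) y u} =
        ⨆ μ ∈ {μ : Fin n → ℤ | wtSp q d K (ρ (Pi.single j 1)) μ ≠ ⊥ ∧
            μ ≠ σ w₀ (fun k => ((Pi.single j 1 : Fin n → ℕ) k : ℤ))},
          wtSp q d K (ρ (Pi.single j 1)) μ) := by
  classical
  intro i j u hu hu0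
  obtain ⟨B, Bf, hinv⟩ := DemAux.exists_form (a := a) W σ ha_diag s hs
  have hR := DemAux.mkRep q hq a d hd_pos U E F K hrel hUuniv (V (Pi.single j 1))
    (ρ (Pi.single j 1)) (hsimple _)
  have hI := DemAux.wt_indep q hq d hd_pos U K hrel.1 (V (Pi.single j 1)) (ρ (Pi.single j 1))
  obtain ⟨vh, hvh0, hvh, hvhE⟩ := hhw (Pi.single j 1)
  have hcast : (fun k => ((Pi.single j 1 : Fin n → ℕ) k : ℤ)) = (Pi.single j 1 : Fin n → ℤ) := by
    ext k
    by_cases h : k = j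
    · subst h; simp
    · simp [h]
  rw [hcast] at hu hvh ⊢
  have hex : ∀ w : W, Module.finrank ℂ (wtSp q d K (ρ (Pi.single j 1))
      (σ w (Pi.single j 1 : Fin n → ℤ))) = 1 := by
    intro w
    have h := hextremal (Pi.single j 1) w
    rwa [hcast] at h
  have := hfd (Pi.single j 1)
  have hsn : ∀ i, 0 ≤ (Pi.single j 1 : Fin n → ℤ) i := by
    intro i
    by_cases h : i = j
    · subst h; simp
    · simp [h]
  generalize ρ (Pi.single j 1) = r at *
  have hmax := hR.maxnorm hI ha_diag Bf hsn hvh hvh0 hvhE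
  obtain ⟨k, hk⟩ := DemAux.w0_perm hn W σ w₀ hw₀ j
  have hrt := DemAux.w0_root hn W σ ha_diag Bf hinv w₀ hw₀ j k hk
  set lam : Fin n → ℤ := σ w₀ (Pi.single j 1) with hlam
  have hnorm : B lam lam = B (Pi.single j 1) (Pi.single j 1) := hinv _ _ _
  have hF0 : ∀ v ∈ wtSp q d K r lam, ∀ l, r (F l) v = 0 := by
    intro v hv l
    by_contra hne
    have h1 := hmax _ ((Submodule.ne_bot_iff _).2 ⟨_, hR.hf l lam v hv, hne⟩)
    have h3 := Bf.norm_sub ha_diag lam l (hw₀ _ hsn l)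
    linarith
  have hE0 : ∀ v ∈ wtSp q d K r lam, ∀ l, l ≠ k → r (E l) v = 0 := by
    intro v hv l hl
    by_contra hne
    have h1 := hmax _ ((Submodule.ne_bot_iff _).2 ⟨_, hR.he l lam v hv, hne⟩)
    have h3 := Bf.norm_add ha_diag lam l (by rw [hk]; simp [hl])
    linarith
  have hgen : ∀ v ∈ wtSp q d K r lam, v ≠ 0 → ∀ N : Submodule ℂ (V (Pi.single j 1)), v ∈ N →
      (∀ k, ∀ x ∈ N, r (E k) x ∈ N) → N = ⊤ := by
    intro v hv hv0 N hvN hN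
    exact hR.swap.gen (ν := -lam) (by simpa using hv) hv0 (hF0 v hv) N hvN hN
  have hmul : ∀ w w' x, σ (w * w') x = σ w (σ w' x) := fun w w' x => by rw [map_mul]; rfl
  constructor
  · intro hij
    have hw : σ (w₀ * s i) (Pi.single j 1) = lam := by
      rw [hmul, hs, hlam]
      congr 1
      ext l
      simp [hij]
    rw [hw] at hu
    exact hgen u hu hu0 _ (DemAux.dem_mem u) (DemAux.dem_stable u)
  · rintro rfl
    have hw : σ (w₀ * s i) (Pi.single i 1) = lam + DemAux.rt a k := by
      have h1 : σ (s i) (Pi.single i 1) = Pi.single i 1 - DemAux.rt a i := by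
        rw [hs]
        ext l
        simp [DemAux.rt]
      have h3 : σ w₀ (Pi.single i 1 - DemAux.rt a i) =
          σ w₀ (Pi.single i 1) - σ w₀ (DemAux.rt a i) :=
        map_sub (Multiplicative.toAdd (σ w₀)) _ _
      rw [hmul, h1, h3, hrt, sub_neg_eq_add]
    have hdim := hex (w₀ * s i)
    rw [hw] at hu hdim
    obtain ⟨v, hv, hv0⟩ : ∃ v ∈ wtSp q d K r lam, v ≠ 0 := by
      rw [← Submodule.ne_bot_iff]
      intro h
      have := hex w₀
      rw [← hlam, h] at this
      simp at this
    have hEv : r (E k) v ∈ wtSp q d K r (lam + DemAux.rt a k) := hR.he k lam v hv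
    obtain ⟨t, ht⟩ : ∃ t : ℂ, t • u = r (E k) v := by
      have h := (finrank_eq_one_iff_of_nonzero' (⟨u, hu⟩ : wtSp q d K r (lam + DemAux.rt a k))
        (by simpa using hu0)).1 hdim ⟨_, hEv⟩
      obtain ⟨t, ht⟩ := h
      exact ⟨t, congrArg Subtype.val ht⟩
    set N := Submodule.span ℂ {x | ∃ y ∈ Algebra.adjoin ℂ (Set.range E), x = r y u} with hN
    have hNE : ∀ k, ∀ x ∈ N, r (E k) x ∈ N := DemAux.dem_stable u
    have huN : u ∈ N := DemAux.dem_mem u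
    have htop : Submodule.span ℂ {v} ⊔ N = ⊤ := by
      refine hgen v hv hv0 _ (Submodule.mem_sup_left (Submodule.mem_span_singleton_self v)) ?_
      intro l x hx
      obtain ⟨y, hy, z, hz, rfl⟩ := Submodule.mem_sup.1 hx
      obtain ⟨b, rfl⟩ := Submodule.mem_span_singleton.1 hy
      refine Submodule.mem_sup_right ?_
      rw [map_add, map_smul]
      refine Submodule.add_mem _ (Submodule.smul_mem _ _ ?_) (hNE l z hz)
      by_cases hl : l = k
      · rw [hl, ← ht]
        exact Submodule.smul_mem _ _ huN
      · rw [hE0 v hv l hl]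
        exact Submodule.zero_mem _
    have hle : N ≤ ⨆ μ ∈ {μ : Fin n → ℤ | B (fun _ => 1) lam < B (fun _ => 1) μ},
        wtSp q d K r μ := by
      refine DemAux.dem_le u _ ?_ ?_
      · refine (le_iSup₂_of_le (lam + DemAux.rt a k) ?_ le_rfl :
          wtSp q d K r (lam + DemAux.rt a k) ≤ _) hu
        have := Bf.root_pos ha_diag (fun _ => 1) k (by norm_num)
        simp only [Set.mem_ofPred_eq, map_add]
        linarith
      · intro l x hx
        have hstab : (⨆ μ ∈ {μ : Fin n → ℤ | B (fun _ => 1) lam < B (fun _ => 1) μ},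
            wtSp q d K r μ) ≤ (⨆ μ ∈ {μ : Fin n → ℤ | B (fun _ => 1) lam < B (fun _ => 1) μ},
            wtSp q d K r μ).comap (r (E l)) := by
          refine iSup₂_le ?_
          intro μ hμ y hy
          refine (le_iSup₂_of_le (μ + DemAux.rt a l) ?_ le_rfl :
            wtSp q d K r (μ + DemAux.rt a l) ≤ _) (hR.he l μ y hy)
          have := Bf.root_pos ha_diag (fun _ => 1) l (by norm_num)
          simp only [Set.mem_ofPred_eq, map_add] at hμ ⊢
          linarith
        exact hstab hx
    have hle2 : N ≤ ⨆ μ ∈ {μ : Fin n → ℤ | wtSp q d K r μ ≠ ⊥ ∧ μ ≠ lam}, wtSp q d K r μ := by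
      refine hle.trans (iSup₂_le ?_)
      intro μ hμ
      by_cases hb : wtSp q d K r μ = ⊥
      · rw [hb]; exact bot_le
      · refine le_iSup₂_of_le μ ⟨hb, ?_⟩ le_rfl
        rintro rfl
        exact lt_irrefl (B (fun _ => 1) lam) hμ
    refine le_antisymm hle2 (iSup₂_le ?_)
    intro μ hμ x hx
    have hxt : x ∈ Submodule.span ℂ {v} ⊔ N := htop ▸ Submodule.mem_top
    obtain ⟨y, hy, z, hz, hyz⟩ := Submodule.mem_sup.1 hxt
    have hyl : y ∈ wtSp q d K r lam := by
      obtain ⟨b, rfl⟩ := Submodule.mem_span_singleton.1 hy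
      exact Submodule.smul_mem _ _ hv
    have hy0 : y = 0 := by
      refine DemAux.indep_zero hI (S := {μ : Fin n → ℤ | wtSp q d K r μ ≠ ⊥ ∧ μ ≠ lam})
        (fun h => h.2 rfl) hyl ?_
      rw [eq_sub_of_add_eq hyz]
      exact Submodule.sub_mem _
        ((le_iSup₂_of_le μ hμ le_rfl : wtSp q d K r μ ≤ _) hx) (hle2 hz)
    rw [← hyz, hy0, zero_add]
    exact hz
end

section
/- For all i, j ∈ {1,…,n}, the negative Demazure module V^-_{s_i}(ϖ_j) equals V(ϖ_j) if i ≠ j, and equals the direct sum ⊕_{μ ∈ Ω(ϖ_j) \ {ϖ_j}} V(ϖ_j)_μ of all weight spaces of V(ϖ_j) except the highest one if i = j. -/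
open scoped TensorProduct

theorem dm_height {n : ℕ} (a : Fin n → Fin n → ℤ) (ha_diag : ∀ i, a i i = 2)
    (W : Type) [Group W] [Finite W] (σ : W →* Multiplicative (AddAut (Fin n → ℤ)))
    (s : Fin n → W)
    (hs : ∀ i (μ : Fin n → ℤ), σ (s i) μ = fun k => μ k - μ i * a k i) :
    ∃ h : (Fin n → ℤ) →+ ℤ, ∀ i, 0 < h (fun k => a k i) := by
  classical
  have := Fintype.ofFinite W
  let T : W → (Fin n → ℤ) →+ (Fin n → ℤ) := fun w => (Multiplicative.toAdd (σ w)).toAddMonoidHom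
  have hTmul : ∀ w w' x, T (w * w') x = T w (T w' x) := by
    intro w w' x
    change (σ (w * w')) x = σ w (σ w' x)
    rw [map_mul]
    rfl
  have hT1 : ∀ x, T 1 x = x := by
    intro x
    change (σ 1) x = x
    rw [map_one]
    rfl
  have hTs : ∀ i x, T (s i) x = fun k => x k - x i * a k i := hs
  let B : (Fin n → ℤ) → (Fin n → ℤ) → ℤ := fun x y => ∑ w : W, ∑ k, T w x k * T w y k
  have hBinv : ∀ w' x y, B (T w' x) (T w' y) = B x y := by
    intro w' x y
    simp only [B, ← hTmul]
    exact Fintype.sum_equiv (Equiv.mulRight w') _ _ (fun w => rfl)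
  have hBaddr : ∀ x y z, B x (y + z) = B x y + B x z := by
    intro x y z
    simp only [B, map_add, Pi.add_apply, mul_add, Finset.sum_add_distrib]
  have hBnegr : ∀ x y, B x (-y) = - B x y := by
    intro x y
    simp only [B, map_neg, Pi.neg_apply, mul_neg, Finset.sum_neg_distrib]
  have hBsubl : ∀ x y z, B (x - y) z = B x z - B y z := by
    intro x y z
    simp only [B, map_sub, Pi.sub_apply, sub_mul, Finset.sum_sub_distrib]
  have hBpos : ∀ x, x ≠ 0 → 0 < B x x := by
    intro x hx
    obtain ⟨k, hk⟩ := Function.ne_iff.mp hx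
    refine Finset.sum_pos' (fun w _ => Finset.sum_nonneg fun k _ => mul_self_nonneg _)
      ⟨1, Finset.mem_univ _, Finset.sum_pos' (fun k _ => mul_self_nonneg _)
        ⟨k, Finset.mem_univ _, ?_⟩⟩
    rw [hT1]
    exact mul_self_pos.mpr hk
  refine ⟨AddMonoidHom.mk' (B (fun _ => 1)) (hBaddr _), fun i => ?_⟩
  change 0 < B (fun _ => 1) (fun k => a k i)
  have h1 := hBinv (s i) (fun _ => 1) (fun k => a k i)
  have h2 : T (s i) (fun _ => 1) = (fun _ => 1) - (fun k => a k i) := by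
    rw [hTs]; funext k; simp
  have h3 : T (s i) (fun k => a k i) = - (fun k => a k i) := by
    rw [hTs]; funext k; simp [ha_diag]; ring
  rw [h2, h3, hBnegr, hBsubl] at h1
  have h4 := hBpos (fun k => a k i) (fun h => by
    have := congrFun h i
    simp [ha_diag] at this)
  linarith

theorem dm_gen (q : ℂ) {n : ℕ} (a : Fin n → Fin n → ℤ) (d : Fin n → ℕ)
    (U : Type) [Ring U] [Algebra ℂ U]
    (E F : Fin n → U) (K : Fin n → Uˣ)
    (hrel : UqRels q a d U E F K)
    (hUuniv : ∀ (B : Type) [Ring B] [Algebra ℂ B] (E' F' : Fin n → B) (K' : Fin n → Bˣ),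
      UqRels q a d B E' F' K' → ∃! φ : U →ₐ[ℂ] B,
        (∀ i, φ (E i) = E' i) ∧ (∀ i, φ (F i) = F' i) ∧ (∀ i, φ (K i : U) = (K' i : B)))
    (S : Subalgebra ℂ U) (hE : ∀ i, E i ∈ S) (hF : ∀ i, F i ∈ S) (hK : ∀ i, (K i : U) ∈ S)
    (hK' : ∀ i, (((K i)⁻¹ : Uˣ) : U) ∈ S) (x : U) : x ∈ S := by
  obtain ⟨r1, r2, r3, r4, r5, r6⟩ := hrel
  let K' : Fin n → Sˣ := fun i => ⟨⟨K i, hK i⟩, ⟨((K i)⁻¹ : Uˣ), hK' i⟩,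
    Subtype.ext (by simp), Subtype.ext (by simp)⟩
  have hrS : UqRels q a d S (fun i => ⟨E i, hE i⟩) (fun i => ⟨F i, hF i⟩) K' := by
    refine ⟨fun i j => Subtype.ext (r1 i j), fun i j => Subtype.ext (r2 i j),
      fun i j => Subtype.ext (r3 i j), fun i j => Subtype.ext ?_, fun i j h => Subtype.ext ?_,
      fun i j h => Subtype.ext ?_⟩
    · have := r4 i j
      split_ifs with h
      · rw [if_pos h] at this; exact this
      · rw [if_neg h] at this; exact this
    · rw [ZeroMemClass.coe_zero, ← r5 i j h, AddSubmonoidClass.coe_finsetSum]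
      rfl
    · rw [ZeroMemClass.coe_zero, ← r6 i j h, AddSubmonoidClass.coe_finsetSum]
      rfl
  obtain ⟨φ, ⟨p1, p2, p3⟩, -⟩ := hUuniv S _ _ _ hrS
  have huniq := (hUuniv U E F K ⟨r1, r2, r3, r4, r5, r6⟩).unique
    (y₁ := S.val.comp φ) (y₂ := AlgHom.id ℂ U)
    ⟨fun i => by simp [p1], fun i => by simp [p2], fun i => by simp [p3, K']⟩
    ⟨fun i => rfl, fun i => rfl, fun i => rfl⟩
  have := congrArg (fun f => f x) huniq
  simp at this
  rw [← this]
  exact (φ x).2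

section dm
variable {q : ℂ} {n : ℕ} {a : Fin n → Fin n → ℤ} {d : Fin n → ℕ}
  {U : Type} [Ring U] [Algebra ℂ U] {E F : Fin n → U} {K : Fin n → Uˣ}
  {M : Type} [AddCommGroup M] [Module ℂ M] {ρ : U →ₐ[ℂ] Module.End ℂ M}

theorem dm_mem_wt (μ : Fin n → ℤ) (x : M) :
    x ∈ wtSp q d K ρ μ ↔ ∀ i, ρ (K i : U) x = (q ^ (μ i * (d i : ℤ))) • x := by
  simp [wtSp, sub_eq_zero]

theorem dm_Kinv {μ : Fin n → ℤ} {x : M} (hq0 : q ≠ 0)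
    (hx : x ∈ wtSp q d K ρ μ) (i : Fin n) :
    ρ (((K i)⁻¹ : Uˣ) : U) x = (q ^ (-(μ i * (d i : ℤ)))) • x := by
  have h := (dm_mem_wt μ x).1 hx i
  have h2 : ρ (((K i)⁻¹ : Uˣ) : U) (ρ (K i : U) x) = x := by
    rw [← Module.End.mul_apply, ← map_mul]; simp
  rw [h, map_smul] at h2
  rw [zpow_neg]
  rw [eq_inv_smul_iff₀ (zpow_ne_zero _ hq0)]
  exact h2

theorem dm_F_wt (hq0 : q ≠ 0) (ha_symm : ∀ i j, (d i : ℤ) * a i j = (d j : ℤ) * a j i)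
    (hrel : UqRels q a d U E F K) {μ : Fin n → ℤ} {x : M}
    (hx : x ∈ wtSp q d K ρ μ) (j : Fin n) :
    ρ (F j) x ∈ wtSp q d K ρ (fun k => μ k - a k j) := by
  rw [dm_mem_wt] at *
  intro i
  rw [← Module.End.mul_apply, ← map_mul, hrel.2.2.1 i j, map_smul, map_mul,
    LinearMap.smul_apply, Module.End.mul_apply, hx i, map_smul, smul_smul, ← zpow_add₀ hq0]
  congr 2
  ring

theorem dm_indep (hq0 : q ≠ 0) (hq1 : ∀ m : ℤ, q ^ m = 1 → m = 0) (hd_pos : ∀ i, 0 < d i)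
    (hrel : UqRels q a d U E F K) : iSupIndep (wtSp q d K ρ) := by
  have h := Module.End.independent_iInf_maxGenEigenspace_of_forall_mapsTo
    (fun i => ρ (K i : U)) (fun i j => Module.End.mapsTo_maxGenEigenspace_of_comm (by
      change _ * _ = _ * _
      rw [← map_mul, ← map_mul, hrel.1]))
  have hinj : Function.Injective (fun (μ : Fin n → ℤ) i => q ^ (μ i * (d i : ℤ))) := by
    intro μ ν hμν
    funext i
    have h1 := congrFun hμν i
    simp only at h1
    have h2 : q ^ (μ i * (d i : ℤ) - ν i * (d i : ℤ)) = 1 := by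
      rw [zpow_sub₀ hq0, h1, div_self (zpow_ne_zero _ hq0)]
    have h3 := hq1 _ h2
    have h4 : (μ i - ν i) * (d i : ℤ) = 0 := by rw [← h3]; ring
    have := hd_pos i
    rcases mul_eq_zero.1 h4 with h5 | h5 <;> omega
  refine (h.comp hinj).mono ?_
  intro μ x hx
  rw [dm_mem_wt] at hx
  simp only [Function.comp, Submodule.mem_iInf]
  intro i
  rw [Module.End.mem_maxGenEigenspace]
  exact ⟨1, by simp [hx i]⟩

/-- The `U⁻`-span of `x`. -/
def dmN (F : Fin n → U) (ρ : U →ₐ[ℂ] Module.End ℂ M) (x : M) : Submodule ℂ M :=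
  Submodule.span ℂ {z | ∃ y ∈ Algebra.adjoin ℂ (Set.range F), z = ρ y x}

theorem dmN_self (x : M) : x ∈ dmN F ρ x :=
  Submodule.subset_span ⟨1, one_mem _, by simp⟩

theorem dmN_F (x : M) (i : Fin n) {z : M} (hz : z ∈ dmN F ρ x) : ρ (F i) z ∈ dmN F ρ x := by
  induction hz using Submodule.span_induction with
  | mem z hz =>
    obtain ⟨y, hy, rfl⟩ := hz
    exact Submodule.subset_span ⟨F i * y,
      mul_mem (Algebra.subset_adjoin (Set.mem_range_self i)) hy, by simp⟩
  | zero => simp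
  | add a b _ _ h1 h2 => rw [map_add]; exact add_mem h1 h2
  | smul c a _ h => rw [map_smul]; exact Submodule.smul_mem _ _ h

theorem dmN_le {x : M} {P : Submodule ℂ M} (hx : x ∈ P)
    (hF : ∀ i, ∀ z ∈ P, ρ (F i) z ∈ P) : dmN F ρ x ≤ P := by
  refine Submodule.span_le.2 ?_
  rintro _ ⟨y, hy, rfl⟩
  have : ∀ z ∈ P, ρ y z ∈ P := by
    induction hy using Algebra.adjoin_induction with
    | mem y hy => obtain ⟨i, rfl⟩ := hy; exact hF i
    | algebraMap r => intro z hz; simpa [Module.algebraMap_end_apply] using P.smul_mem r hz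
    | add a b _ _ h1 h2 => intro z hz; rw [map_add]; exact add_mem (h1 z hz) (h2 z hz)
    | mul a b _ _ h1 h2 => intro z hz; rw [map_mul]; exact h1 _ (h2 z hz)
  exact this x hx

/-- Induction inside `U⁻ x`. -/
theorem dmN_prop {x : M} (p : M → Prop) (P : Submodule ℂ M) (hP : ∀ z, z ∈ P ↔ p z ∧ z ∈ dmN F ρ x)
    (hx : p x) (hF : ∀ i, ∀ z ∈ dmN F ρ x, p z → p (ρ (F i) z)) :
    ∀ z ∈ dmN F ρ x, p z := by
  intro z hz
  have : dmN F ρ x ≤ P := dmN_le ((hP _).2 ⟨hx, dmN_self x⟩)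
    (fun i z hz => (hP _).2 ⟨hF i z ((hP _).1 hz).2 ((hP _).1 hz).1, dmN_F x i ((hP _).1 hz).2⟩)
  exact ((hP _).1 (this hz)).1

theorem dmN_op {x : M} (f : Module.End ℂ M) (hx : f x ∈ dmN F ρ x)
    (hF : ∀ i, ∀ z ∈ dmN F ρ x, f z ∈ dmN F ρ x → f (ρ (F i) z) ∈ dmN F ρ x) :
    ∀ z ∈ dmN F ρ x, f z ∈ dmN F ρ x :=
  dmN_prop (fun z => f z ∈ dmN F ρ x) ((dmN F ρ x).comap f ⊓ dmN F ρ x)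
    (fun z => by simp) hx hF

theorem dmN_stable (hq0 : q ≠ 0) (hrel : UqRels q a d U E F K)
    (hUuniv : ∀ (B : Type) [Ring B] [Algebra ℂ B] (E' F' : Fin n → B) (K' : Fin n → Bˣ),
      UqRels q a d B E' F' K' → ∃! φ : U →ₐ[ℂ] B,
        (∀ i, φ (E i) = E' i) ∧ (∀ i, φ (F i) = F' i) ∧ (∀ i, φ (K i : U) = (K' i : B)))
    {μ : Fin n → ℤ} {x : M} (hx : x ∈ wtSp q d K ρ μ) (hE : ∀ i, ρ (E i) x = 0) (y : U) :
    ∀ z ∈ dmN F ρ x, ρ y z ∈ dmN F ρ x := by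
  have hmul : ∀ (u v : U) (z : M), ρ u (ρ v z) = ρ (u * v) z := by
    intro u v z; rw [map_mul]; rfl
  have hKs : ∀ i, ∀ z ∈ dmN F ρ x, ρ (K i : U) z ∈ dmN F ρ x := by
    intro i
    refine dmN_op _ ?_ ?_
    · rw [(dm_mem_wt μ x).1 hx i]; exact Submodule.smul_mem _ _ (dmN_self x)
    · intro j z hz h
      rw [hmul, hrel.2.2.1 i j, map_smul, LinearMap.smul_apply, ← hmul]
      exact Submodule.smul_mem _ _ (dmN_F x j h)
  have hKs' : ∀ i, ∀ z ∈ dmN F ρ x, ρ (((K i)⁻¹ : Uˣ) : U) z ∈ dmN F ρ x := by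
    intro i
    refine dmN_op _ ?_ ?_
    · rw [dm_Kinv hq0 hx i]; exact Submodule.smul_mem _ _ (dmN_self x)
    · intro j z hz h
      have e : (((K i)⁻¹ : Uˣ) : U) * F j
          = (q ^ ((d i : ℤ) * a i j)) • (F j * (((K i)⁻¹ : Uˣ) : U)) := by
        rw [Units.inv_mul_eq_iff_eq_mul, mul_smul_comm, ← mul_assoc, hrel.2.2.1 i j,
          smul_mul_assoc, smul_smul, ← zpow_add₀ hq0]
        simp
      rw [hmul, e, map_smul, LinearMap.smul_apply, ← hmul]
      exact Submodule.smul_mem _ _ (dmN_F x j h)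
  have hEs : ∀ i, ∀ z ∈ dmN F ρ x, ρ (E i) z ∈ dmN F ρ x := by
    intro i
    refine dmN_op _ ?_ ?_
    · rw [hE]; exact zero_mem _
    · intro j z hz h
      have e := hrel.2.2.2.1 i j
      rw [sub_eq_iff_eq_add'] at e
      rw [hmul, e, map_add, LinearMap.add_apply, ← hmul]
      refine add_mem (dmN_F x j h) ?_
      split_ifs
      · rw [map_smul, map_sub]
        exact Submodule.smul_mem _ _ (sub_mem (hKs i z hz) (hKs' i z hz))
      · simp
  let S : Subalgebra ℂ U :=
    { carrier := {y | ∀ z ∈ dmN F ρ x, ρ y z ∈ dmN F ρ x}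
      mul_mem' := fun {a b} ha hb z hz => by rw [← hmul]; exact ha _ (hb z hz)
      add_mem' := fun {a b} ha hb z hz => by rw [map_add]; exact add_mem (ha z hz) (hb z hz)
      algebraMap_mem' := fun r z hz => by
        simpa [Module.algebraMap_end_apply] using Submodule.smul_mem _ r hz }
  exact dm_gen q a d U E F K hrel hUuniv S hEs (fun i z hz => dmN_F x i hz) hKs hKs' y

theorem dm_main (hq0 : q ≠ 0) (hq1 : ∀ m : ℤ, q ^ m = 1 → m = 0)
    (hd_pos : ∀ i, 0 < d i) (ha_symm : ∀ i j, (d i : ℤ) * a i j = (d j : ℤ) * a j i)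
    (hrel : UqRels q a d U E F K)
    (hUuniv : ∀ (B : Type) [Ring B] [Algebra ℂ B] (E' F' : Fin n → B) (K' : Fin n → Bˣ),
      UqRels q a d B E' F' K' → ∃! φ : U →ₐ[ℂ] B,
        (∀ i, φ (E i) = E' i) ∧ (∀ i, φ (F i) = F' i) ∧ (∀ i, φ (K i : U) = (K' i : B)))
    (h : (Fin n → ℤ) →+ ℤ) (hh : ∀ i, 0 < h (fun k => a k i))
    (hsimple : ∀ (N : Submodule ℂ M), (∀ (u : U), ∀ v ∈ N, ρ u v ∈ N) → N = ⊥ ∨ N = ⊤)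
    (j : Fin n) (μ : Fin n → ℤ) (hμj : μ j = 1) (hμi : ∀ i, i ≠ j → μ i = 0)
    (v : M) (hv0 : v ≠ 0) (hv : v ∈ wtSp q d K ρ μ) (hE : ∀ i, ρ (E i) v = 0) :
    dmN F ρ v = ⊤ ∧ ρ (F j) v ≠ 0 ∧ dmN F ρ (ρ (F j) v) =
      ⨆ ν ∈ {ν : Fin n → ℤ | wtSp q d K ρ ν ≠ ⊥ ∧ ν ≠ μ}, wtSp q d K ρ ν := by
  have hmul : ∀ (u v : U) (z : M), ρ u (ρ v z) = ρ (u * v) z := by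
    intro u v z; rw [map_mul]; rfl
  have htop : dmN F ρ v = ⊤ := by
    rcases hsimple _ (fun u => dmN_stable hq0 hrel hUuniv hv hE u) with h0 | h0
    · exact absurd ((Submodule.mem_bot ℂ).1 (h0 ▸ dmN_self v)) hv0
    · exact h0
  -- the lower part
  let L : Submodule ℂ M := ⨆ ν ∈ {ν : Fin n → ℤ | h ν < h μ}, wtSp q d K ρ ν
  have hLF : ∀ i, ∀ z ∈ L, ρ (F i) z ∈ L := by
    intro i
    have : L ≤ L.comap (ρ (F i)) := by
      refine iSup₂_le fun ν hν z hz => ?_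
      have hz' := dm_F_wt hq0 ha_symm hrel hz i
      refine Submodule.mem_iSup_of_mem (fun k => ν k - a k i)
        (Submodule.mem_iSup_of_mem ?_ hz')
      have e : h (fun k => ν k - a k i) = h ν - h (fun k => a k i) := by
        rw [← map_sub]; rfl
      have := hh i
      have hν' : h ν < h μ := hν
      change h (fun k => ν k - a k i) < h μ
      omega
    exact this
  have hFv : ∀ i, ρ (F i) v ∈ L := by
    intro i
    refine Submodule.mem_iSup_of_mem (fun k => μ k - a k i)
        (Submodule.mem_iSup_of_mem ?_ (dm_F_wt hq0 ha_symm hrel hv i))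
    have e : h (fun k => μ k - a k i) = h μ - h (fun k => a k i) := by
      rw [← map_sub]; rfl
    have := hh i
    change h (fun k => μ k - a k i) < h μ
    omega
  have hLle : L ≤ ⨆ ν, ⨆ (_ : ν ≠ μ), wtSp q d K ρ ν := by
    refine iSup₂_mono' fun ν hν => ⟨ν, ?_, le_rfl⟩
    rintro rfl
    exact lt_irrefl (h ν) hν
  have hdisj := (dm_indep (ρ := ρ) hq0 hq1 hd_pos hrel) μ
  rw [Submodule.disjoint_def] at hdisj
  have hvL : v ∉ L := fun hvL => hv0 (hdisj v hv (hLle hvL))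
  have hcomm : ∀ k i, ρ (E k) (ρ (F i) v) = if k = i then
      ((q ^ (d k : ℤ) - q ^ (-(d k : ℤ)))⁻¹ *
        (q ^ (μ k * (d k : ℤ)) - q ^ (-(μ k * (d k : ℤ))))) • v else 0 := by
    intro k i
    have e := hrel.2.2.2.1 k i
    rw [sub_eq_iff_eq_add'] at e
    rw [hmul, e, map_add, LinearMap.add_apply, ← hmul, hE, map_zero, zero_add]
    split_ifs
    · rw [map_smul, map_sub, LinearMap.smul_apply, LinearMap.sub_apply, dm_Kinv hq0 hv,
        (dm_mem_wt μ v).1 hv, ← sub_smul, smul_smul]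
    · simp
  have hFi : ∀ i, i ≠ j → ρ (F i) v = 0 := by
    intro i hij
    have hsing : ∀ k, ρ (E k) (ρ (F i) v) = 0 := by
      intro k
      rw [hcomm]
      split_ifs with hk
      · subst hk; simp [hμi k hij]
      · rfl
    rcases hsimple _ (fun u => dmN_stable hq0 hrel hUuniv
      (dm_F_wt hq0 ha_symm hrel hv i) hsing u) with h0 | h0
    · exact (Submodule.mem_bot ℂ).1 (h0 ▸ dmN_self _)
    · exfalso
      have : dmN F ρ (ρ (F i) v) ≤ L := dmN_le (hFv i) hLF
      rw [h0] at this
      exact hvL (this trivial)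
  refine ⟨htop, ?_, ?_⟩
  · intro h0
    have e := hcomm j j
    rw [h0, map_zero, if_pos rfl, hμj, one_mul, inv_mul_cancel₀, one_smul] at e
    · exact hv0 e.symm
    · intro e1
      have e2 : q ^ ((d j : ℤ) + d j) = 1 := by
        rw [zpow_add₀ hq0]
        nth_rewrite 1 [sub_eq_zero.1 e1]
        rw [← zpow_add₀ hq0]; simp
      have := hq1 _ e2
      have := hd_pos j
      omega
  · have hNL : dmN F ρ (ρ (F j) v) ≤ L := dmN_le (hFv j) hLF
    apply le_antisymm
    · refine (hNL.trans hLle).trans ?_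
      refine iSup₂_le fun ν hν => ?_
      by_cases hb : wtSp q d K ρ ν = ⊥
      · rw [hb]; exact bot_le
      · exact le_iSup₂_of_le ν ⟨hb, hν⟩ le_rfl
    · refine iSup₂_le fun ν hν x hx => ?_
      have hsum : dmN F ρ v ≤ Submodule.span ℂ {v} ⊔ dmN F ρ (ρ (F j) v) := by
        refine dmN_le (Submodule.mem_sup_left (Submodule.mem_span_singleton_self v)) ?_
        intro i z hz
        obtain ⟨z1, hz1, z2, hz2, rfl⟩ := Submodule.mem_sup.1 hz
        obtain ⟨c, rfl⟩ := Submodule.mem_span_singleton.1 hz1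
        rw [map_add, map_smul]
        refine Submodule.mem_sup_right (add_mem (Submodule.smul_mem _ _ ?_) (dmN_F _ i hz2))
        by_cases hij : i = j
        · subst hij; exact dmN_self _
        · rw [hFi i hij]; exact zero_mem _
      rw [htop] at hsum
      obtain ⟨z1, hz1, z2, hz2, rfl⟩ := Submodule.mem_sup.1 (hsum (Submodule.mem_top (x := x)))
      obtain ⟨c, rfl⟩ := Submodule.mem_span_singleton.1 hz1
      have hx' : c • v + z2 ∈ ⨆ ν, ⨆ (_ : ν ≠ μ), wtSp q d K ρ ν :=
        Submodule.mem_iSup_of_mem ν (Submodule.mem_iSup_of_mem hν.2 hx)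
      have h3 : c • v = 0 := by
        refine hdisj _ (Submodule.smul_mem _ _ hv) ?_
        have := sub_mem hx' (hLle (hNL hz2))
        simpa using this
      rw [h3, zero_add]
      exact hz2

theorem dmN_smul_le (c : ℂ) (x : M) : dmN F ρ (c • x) ≤ dmN F ρ x :=
  dmN_le (Submodule.smul_mem _ _ (dmN_self x)) (fun i _ hz => dmN_F x i hz)

theorem dm_line {P : Submodule ℂ M} (hP : Module.finrank ℂ P = 1) {x y : M} (hx : x ∈ P)
    (hy : y ∈ P) (hx0 : x ≠ 0) (hy0 : y ≠ 0) : dmN F ρ x = dmN F ρ y := by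
  have key : ∀ {x y : M}, x ∈ P → y ∈ P → x ≠ 0 → ∃ c : ℂ, c • x = y := by
    intro x y hx hy hx0
    obtain ⟨c, hc⟩ := (finrank_eq_one_iff_of_nonzero' (⟨x, hx⟩ : P)
      (fun h => hx0 (congrArg Subtype.val h))).1 hP ⟨y, hy⟩
    exact ⟨c, congrArg Subtype.val hc⟩
  apply le_antisymm
  · obtain ⟨c, hc⟩ := key hy hx hy0
    rw [← hc]; exact dmN_smul_le c y
  · obtain ⟨c, hc⟩ := key hx hy hx0
    rw [← hc]; exact dmN_smul_le c x

end dm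

theorem demazure_minus_si
    -- the deformation parameter: a transcendental complex number
    (q : ℂ) (hq : Transcendental ℚ q)
    -- Cartan data of the complex semisimple Lie algebra 𝔤 of rank n
    (n : ℕ) (hn : 0 < n) (a : Fin n → Fin n → ℤ) (d : Fin n → ℕ)
    (ha_diag : ∀ i, a i i = 2) (ha_off : ∀ i j, i ≠ j → a i j ≤ 0)
    (ha_zero : ∀ i j, a i j = 0 ↔ a j i = 0)
    (hd_pos : ∀ i, 0 < d i)
    (ha_symm : ∀ i j, (d i : ℤ) * a i j = (d j : ℤ) * a j i)
    -- the quantised enveloping algebra U = U_q(𝔤): carries elements E i, F i and units K i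
    -- satisfying the defining relations, and is universal for these relations
    (U : Type) [Ring U] [Algebra ℂ U]
    (E F : Fin n → U) (K : Fin n → Uˣ)
    (hrel : UqRels q a d U E F K)
    (hUuniv : ∀ (B : Type) [Ring B] [Algebra ℂ B] (E' F' : Fin n → B) (K' : Fin n → Bˣ),
      UqRels q a d B E' F' K' → ∃! φ : U →ₐ[ℂ] B,
        (∀ i, φ (E i) = E' i) ∧ (∀ i, φ (F i) = F' i) ∧ (∀ i, φ (K i : U) = (K' i : B)))
    -- the Weyl group W, acting faithfully on the weight lattice P = ℤⁿ (coordinates taken in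
    -- the basis of fundamental weights ϖ i), generated by the simple reflections s i, with
    -- longest element w₀ (characterised by: w₀ maps dominant weights to antidominant ones)
    (W : Type) [Group W] [Finite W] (σ : W →* Multiplicative (AddAut (Fin n → ℤ)))
    (hσinj : Function.Injective σ)
    (s : Fin n → W) (hsgen : Subgroup.closure (Set.range s) = ⊤)
    (hs : ∀ i (μ : Fin n → ℤ), σ (s i) μ = fun k => μ k - μ i * a k i)
    (w₀ : W) (hw₀ : ∀ μ : Fin n → ℤ, (∀ i, 0 ≤ μ i) → ∀ i, σ w₀ μ i ≤ 0)
    -- the simple finite-dimensional modules V(λ) of highest weight λ = ∑ c i ϖ i ∈ P⁺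
    (V : (Fin n → ℕ) → Type) [∀ c, AddCommGroup (V c)] [∀ c, Module ℂ (V c)]
    (ρ : ∀ c, U →ₐ[ℂ] Module.End ℂ (V c))
    (hfd : ∀ c, FiniteDimensional ℂ (V c))
    (hsimple : ∀ c (N : Submodule ℂ (V c)), (∀ (u : U), ∀ v ∈ N, ρ c u v ∈ N) → N = ⊥ ∨ N = ⊤)
    (hhw : ∀ c, ∃ v : V c, v ≠ 0 ∧ v ∈ wtSp q d K (ρ c) (fun i => (c i : ℤ)) ∧
      ∀ i, ρ c (E i) v = 0)
    (hwtsum : ∀ c, (⨆ μ : Fin n → ℤ, wtSp q d K (ρ c) μ) = ⊤)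
    (hextremal : ∀ c (w : W),
      Module.finrank ℂ (wtSp q d K (ρ c) (σ w (fun i => (c i : ℤ)))) = 1) :
    -- V⁻_{s_i}(ϖ_j) equals V(ϖ_j) when i ≠ j, and equals the (direct) sum of all
    -- weight spaces of V(ϖ_j) except the highest one when i = j
    ∀ i j : Fin n, ∀ u : V (Pi.single j 1),
      u ∈ wtSp q d K (ρ (Pi.single j 1)) (σ (s i) (fun k => ((Pi.single j 1 : Fin n → ℕ) k : ℤ))) → u ≠ 0 →
      (i ≠ j → Submodule.span ℂ
          {x | ∃ y ∈ Algebra.adjoin ℂ (Set.range F), x = ρ (Pi.single j 1) y u} = ⊤) ∧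
      (i = j → Submodule.span ℂ
          {x | ∃ y ∈ Algebra.adjoin ℂ (Set.range F), x = ρ (Pi.single j 1) y u} =
        ⨆ μ ∈ {μ : Fin n → ℤ | wtSp q d K (ρ (Pi.single j 1)) μ ≠ ⊥ ∧
            μ ≠ (fun k => ((Pi.single j 1 : Fin n → ℕ) k : ℤ))},
          wtSp q d K (ρ (Pi.single j 1)) μ) := by
  have hq0 : q ≠ 0 := by
    rintro rfl
    exact hq isAlgebraic_zero
  have hqn : ∀ m : ℕ, 0 < m → q ^ m ≠ 1 := by
    intro m hm h1
    refine hq (IsAlgebraic.of_pow hm ?_)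
    rw [h1]
    exact isAlgebraic_one
  have hq1 : ∀ m : ℤ, q ^ m = 1 → m = 0 := by
    intro m hm
    by_contra hne
    refine hqn m.natAbs (Int.natAbs_pos.2 hne) ?_
    rcases Int.natAbs_eq m with h | h
    · rw [h, zpow_natCast] at hm; exact hm
    · rw [h, zpow_neg, zpow_natCast, inv_eq_one] at hm; exact hm
  obtain ⟨h, hh⟩ := dm_height a ha_diag W σ s hs
  intro i j u hu hu0
  obtain ⟨v, hv0, hv, hE⟩ := hhw (Pi.single j 1)
  obtain ⟨m1, m2, m3⟩ := dm_main hq0 hq1 hd_pos ha_symm hrel hUuniv h hh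
    (hsimple (Pi.single j 1)) j (fun k => ((Pi.single j 1 : Fin n → ℕ) k : ℤ)) (by simp)
    (fun i hi => by simp [hi]) v hv0 hv hE
  have hext := hextremal (Pi.single j 1) (s i)
  have hsi := hs i (fun k => ((Pi.single j 1 : Fin n → ℕ) k : ℤ))
  constructor
  · intro hij
    have e : σ (s i) (fun k => ((Pi.single j 1 : Fin n → ℕ) k : ℤ))
        = (fun k => ((Pi.single j 1 : Fin n → ℕ) k : ℤ)) := by
      rw [hsi]; funext k; simp [hij]
    rw [e] at hu hext
    exact (dm_line hext hu hv hu0 hv0).trans m1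
  · intro hij
    subst hij
    have e : σ (s i) (fun k => ((Pi.single i 1 : Fin n → ℕ) k : ℤ))
        = (fun k => ((Pi.single i 1 : Fin n → ℕ) k : ℤ) - a k i) := by
      rw [hsi]; funext k; simp
    rw [e] at hu hext
    exact (dm_line hext hu (dm_F_wt hq0 ha_symm hrel hv i) hu0 m2).trans m3
end

section
/- For each i ∈ {1,…,n}, the 𝓗-invariant prime ideal Q_{w_0, s_i w_0} of O_q(G) equals the ideal generated by the single element c^{ϖ_i}_{−ϖ_i, w_0ϖ_i}, and the 𝓗-invariant prime ideal Q_{w_0 s_i, w_0} equals the ideal generated by the single element c^{ϖ_i}_{−w_0ϖ_i, ϖ_i}. -/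
open scoped TensorProduct

/-! ### Abstract weight representations -/

/-- The simple root `α_k` in fundamental-weight coordinates. -/
def alroot {n : ℕ} (a : Fin n → Fin n → ℤ) (k : Fin n) : Fin n → ℤ := fun l => a l k

/-- The integral combination `∑ m_j α_j` of simple roots. -/
def rtc {n : ℕ} (a : Fin n → Fin n → ℤ) (m : Fin n → ℤ) : Fin n → ℤ := fun l => ∑ j, a l j * m j

theorem rtc_add {n : ℕ} (a : Fin n → Fin n → ℤ) (m m' : Fin n → ℤ) :
    rtc a (m + m') = rtc a m + rtc a m' := by
  funext l; simp [rtc, mul_add, Finset.sum_add_distrib]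

theorem rtc_zero {n : ℕ} (a : Fin n → Fin n → ℤ) : rtc a 0 = 0 := by
  funext l; simp [rtc]

theorem rtc_neg {n : ℕ} (a : Fin n → Fin n → ℤ) (m : Fin n → ℤ) :
    rtc a (-m) = - rtc a m := by
  funext l; simp [rtc]

theorem rtc_single {n : ℕ} (a : Fin n → Fin n → ℤ) (k : Fin n) (t : ℤ) :
    rtc a (Pi.single k t) = t • alroot a k := by
  funext l; simp [rtc, alroot, Pi.single_apply, mul_comm]

/-- quantum integer `[m]` at parameter `p`. -/
noncomputable def qint (p : ℂ) (m : ℤ) : ℂ := (p - p⁻¹)⁻¹ * (p ^ m - p ^ (-m))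

theorem qint_step (p : ℂ) (hp : p ≠ 0) (m : ℤ) (t : ℕ) :
    qint p t * qint p (m - t + 1) * (p - p⁻¹) + (p ^ (m - 2 * t) - p ^ (-(m - 2 * t))) =
      qint p (t + 1) * qint p (m - t) * (p - p⁻¹) ∨ p - p⁻¹ = 0 := by
  by_cases h : p - p⁻¹ = 0
  · exact Or.inr h
  left
  unfold qint
  have e1 : p ^ (m - 2 * t) = p ^ m * (p ^ (t : ℤ))⁻¹ * (p ^ (t : ℤ))⁻¹ := by
    rw [← zpow_neg, ← zpow_add₀ hp, ← zpow_add₀ hp]; ring_nf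
  have e2 : p ^ (-(m - 2 * t)) = (p ^ m)⁻¹ * p ^ (t : ℤ) * p ^ (t : ℤ) := by
    rw [← zpow_neg, ← zpow_add₀ hp, ← zpow_add₀ hp]; ring_nf
  have e3 : p ^ (m - t + 1) = p ^ m * (p ^ (t : ℤ))⁻¹ * p := by
    rw [← zpow_neg, ← zpow_add₀ hp, ← zpow_add_one₀ hp]; ring_nf
  have e4 : p ^ (-(m - t + 1)) = (p ^ m)⁻¹ * p ^ (t : ℤ) * p⁻¹ := by
    rw [← zpow_neg, ← zpow_add₀ hp, ← zpow_sub_one₀ hp]; ring_nf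
  have e5 : p ^ ((t : ℤ) + 1) = p ^ (t : ℤ) * p := zpow_add_one₀ hp _
  have e6 : p ^ (-((t : ℤ) + 1)) = (p ^ (t : ℤ))⁻¹ * p⁻¹ := by
    rw [zpow_neg, e5, mul_inv]
  have e7 : p ^ (m - t) = p ^ m * (p ^ (t : ℤ))⁻¹ := zpow_sub₀ hp _ _
  have e8 : p ^ (-(m - t)) = (p ^ m)⁻¹ * p ^ (t : ℤ) := by
    rw [zpow_neg, e7, mul_inv, inv_inv]
  rw [e1, e2, e3, e4, e5, e6, e7, e8, zpow_neg]
  have hS : p ^ (t : ℤ) ≠ 0 := zpow_ne_zero _ hp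
  have hP : p ^ m ≠ 0 := zpow_ne_zero _ hp
  generalize p ^ (t : ℤ) = S at *
  generalize p ^ m = P at *
  have hc : (p - p⁻¹)⁻¹ * (p - p⁻¹) = 1 := inv_mul_cancel₀ h
  have key : (S - S⁻¹) * (P * S⁻¹ * p - P⁻¹ * S * p⁻¹) +
      (P * S⁻¹ * S⁻¹ - P⁻¹ * S * S) * (p - p⁻¹) =
      (S * p - S⁻¹ * p⁻¹) * (P * S⁻¹ - P⁻¹ * S) := by
    field_simp
    ring
  linear_combination (p - p⁻¹)⁻¹ * (p - p⁻¹)⁻¹ * (p - p⁻¹) * key +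
    (-(P * S⁻¹ * S⁻¹ - P⁻¹ * S * S)) * (1 + (p - p⁻¹)⁻¹ * (p - p⁻¹)) * hc

theorem qint_succ (p : ℂ) (hp : p ≠ 0) (h : p - p⁻¹ ≠ 0) (m : ℤ) (t : ℕ) :
    qint p t * qint p (m - t + 1) + qint p (m - 2 * t) = qint p (t + 1) * qint p (m - t) := by
  have := (qint_step p hp m t).resolve_right h
  apply mul_right_cancel₀ h
  rw [← this, add_mul]
  congr 1
  rw [qint, mul_comm, ← mul_assoc, mul_inv_cancel₀ h, one_mul]

/-- A representation with weight spaces, raising operators `X` and lowering operators `Y`. -/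
structure WRep (p : ℂ) {n : ℕ} (a : Fin n → Fin n → ℤ) (d : Fin n → ℕ)
    {V : Type} [AddCommGroup V] [Module ℂ V] (X Y : Fin n → Module.End ℂ V)
    (T : (Fin n → ℤ) → Submodule ℂ V) : Prop where
  hX : ∀ k μ x, x ∈ T μ → X k x ∈ T (μ + alroot a k)
  hY : ∀ k μ x, x ∈ T μ → Y k x ∈ T (μ - alroot a k)
  hXY : ∀ i j μ x, x ∈ T μ → X i (Y j x) - Y j (X i x) =
    if i = j then qint (p ^ (d i : ℤ)) (μ i) • x else 0
  indep : iSupIndep T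
  irr : ∀ S : Set V, (∀ x ∈ S, ∃ μ, x ∈ T μ) →
    (∀ k, ∀ x ∈ Submodule.span ℂ S, X k x ∈ Submodule.span ℂ S) →
    (∀ k, ∀ x ∈ Submodule.span ℂ S, Y k x ∈ Submodule.span ℂ S) →
    Submodule.span ℂ S = ⊥ ∨ Submodule.span ℂ S = ⊤

theorem qint_neg (p : ℂ) (m : ℤ) : qint p (-m) = - qint p m := by
  simp only [qint, neg_neg]; ring

namespace WRep

variable {p : ℂ} {n : ℕ} {a : Fin n → Fin n → ℤ} {d : Fin n → ℕ}
  {V : Type} [AddCommGroup V] [Module ℂ V] {X Y : Fin n → Module.End ℂ V}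
  {T : (Fin n → ℤ) → Submodule ℂ V}

theorem dual (R : WRep p a d X Y T) : WRep p a d Y X (fun μ => T (-μ)) where
  hX k μ x hx := by
    have := R.hY k _ x hx
    rwa [show -μ - alroot a k = -(μ + alroot a k) by abel] at this
  hY k μ x hx := by
    have := R.hX k _ x hx
    rwa [show -μ + alroot a k = -(μ - alroot a k) by abel] at this
  hXY i j μ x hx := by
    have := R.hXY j i _ x hx
    rw [← neg_sub, this]
    by_cases h : i = j
    · subst h
      simp [qint_neg]
    · simp [h, Ne.symm h]
  indep := R.indep.comp neg_injective
  irr S hS h1 h2 := R.irr S (fun x hx => (hS x hx).elim fun μ h => ⟨-μ, h⟩) h2 h1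

/-- The vectors `Y_{l} v`. -/
def low (Y : Fin n → Module.End ℂ V) (v : V) (l : List (Fin n)) : V := l.foldr (fun k x => Y k x) v

theorem low_mem (R : WRep p a d X Y T) {lam : Fin n → ℤ} {v : V} (hv : v ∈ T lam)
    (l : List (Fin n)) : ∃ m : Fin n → ℤ, 0 ≤ m ∧ low Y v l ∈ T (lam - rtc a m) := by
  induction l with
  | nil => exact ⟨0, le_rfl, by simpa [rtc_zero, low] using hv⟩
  | cons k l ih =>
    obtain ⟨m, hm, h⟩ := ih
    refine ⟨m + Pi.single k 1, add_nonneg hm (by simp [Pi.single_nonneg]), ?_⟩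
    have := R.hY k _ _ h
    rw [rtc_add, rtc_single, one_smul, ← sub_sub]
    exact this

theorem span_low (R : WRep p a d X Y T) {lam : Fin n → ℤ} {v : V} (hv : v ∈ T lam)
    (hv0 : v ≠ 0) (hXv : ∀ k, X k v = 0) : Submodule.span ℂ (Set.range (low Y v)) = ⊤ := by
  set N := Submodule.span ℂ (Set.range (low Y v)) with hN
  have hmem : ∀ l, low Y v l ∈ N := fun l => Submodule.subset_span ⟨l, rfl⟩
  have hYN : ∀ k, ∀ x ∈ N, Y k x ∈ N := by
    intro k x hx
    have : N ≤ N.comap (Y k) := by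
      rw [hN, Submodule.span_le]
      rintro _ ⟨l, rfl⟩
      exact hmem (k :: l)
    exact this hx
  have hXl : ∀ i l, X i (low Y v l) ∈ N := by
    intro i l
    induction l with
    | nil => simp [low, hXv]
    | cons k l ih =>
      obtain ⟨m, -, h⟩ := R.low_mem hv l
      have := R.hXY i k _ _ h
      have e : X i (low Y v (k :: l)) = Y k (X i (low Y v l)) +
          if i = k then qint (p ^ (d i : ℤ)) ((lam - rtc a m) i) • low Y v l else 0 := by
        rw [← this]; simp [low]
      rw [e]
      refine N.add_mem (hYN _ _ ih) ?_
      split_ifs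
      · exact N.smul_mem _ (hmem l)
      · exact N.zero_mem
  have hg : ∀ x ∈ Set.range (low Y v), ∃ μ, x ∈ T μ := by
    rintro _ ⟨l, rfl⟩
    obtain ⟨m, -, h⟩ := R.low_mem hv l
    exact ⟨_, h⟩
  have hXN : ∀ k, ∀ x ∈ N, X k x ∈ N := by
    intro k x hx
    have : N ≤ N.comap (X k) := by
      conv_lhs => rw [hN]
      rw [Submodule.span_le]
      rintro _ ⟨l, rfl⟩
      exact hXl k l
    exact this hx
  rcases R.irr (Set.range (low Y v)) hg hXN hYN with h | h
  · exfalso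
    have : v ∈ (⊥ : Submodule ℂ V) := h ▸ hmem []
    exact hv0 (by simpa using this)
  · exact h

theorem weights (R : WRep p a d X Y T) {lam : Fin n → ℤ} {v : V} (hv : v ∈ T lam)
    (hv0 : v ≠ 0) (hXv : ∀ k, X k v = 0) {ν : Fin n → ℤ} (hν : T ν ≠ ⊥) :
    ∃ m : Fin n → ℤ, 0 ≤ m ∧ ν = lam - rtc a m := by
  by_contra hcon
  push Not at hcon
  apply hν
  have h1 : (⊤ : Submodule ℂ V) ≤ ⨆ (j) (_ : j ≠ ν), T j := by
    rw [← R.span_low hv hv0 hXv, Submodule.span_le]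
    rintro _ ⟨l, rfl⟩
    obtain ⟨m, hm, h⟩ := R.low_mem hv l
    exact (le_iSup₂_of_le (f := fun j (_ : j ≠ ν) => T j) _ (Ne.symm (hcon m hm)) le_rfl) h
  have := R.indep ν
  rw [top_le_iff.mp h1] at this
  exact disjoint_top.mp this

theorem sl2 (R : WRep p a d X Y T) (hp : p ≠ 0) (hp' : ∀ m : ℤ, m ≠ 0 → p ^ m ≠ 1)
    (hd : ∀ i, 0 < d i)
    (ha : ∀ i, a i i = 2) {k : Fin n} {μ : Fin n → ℤ} {y : V} (hy : y ∈ T μ) (hy0 : y ≠ 0)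
    (hXy : X k y = 0) (t : ℕ) :
    (Y k ^ t) y ∈ T (μ - t • alroot a k) ∧
    X k ((Y k ^ (t + 1)) y) = (qint (p ^ (d k : ℤ)) (t + 1) * qint (p ^ (d k : ℤ)) (μ k - t)) •
      (Y k ^ t) y ∧
    ((t : ℤ) ≤ μ k → (Y k ^ t) y ≠ 0) := by
  set r : ℂ := p ^ (d k : ℤ) with hr
  have hr0 : r ≠ 0 := zpow_ne_zero _ hp
  have hd' : (d k : ℤ) ≠ 0 := by have := hd k; omega
  have hrm : ∀ m : ℤ, m ≠ 0 → r ^ m - r ^ (-m) ≠ 0 := by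
    intro m hm h
    rw [sub_eq_zero] at h
    apply hp' ((d k : ℤ) * (2 * m)) (mul_ne_zero hd' (by omega))
    rw [zpow_mul, ← hr, two_mul, zpow_add₀ hr0]
    nth_rewrite 1 [h]
    rw [← zpow_add₀ hr0]; simp
  have hr1 : r - r⁻¹ ≠ 0 := by simpa using hrm 1 one_ne_zero
  have hq : ∀ m : ℤ, m ≠ 0 → qint r m ≠ 0 := fun m hm =>
    mul_ne_zero (inv_ne_zero hr1) (hrm m hm)
  have hmem : ∀ t : ℕ, (Y k ^ t) y ∈ T (μ - t • alroot a k) := by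
    intro t
    induction t with
    | zero => simpa using hy
    | succ t ih =>
      have := R.hY k _ _ ih
      rw [pow_succ', add_smul, one_smul, ← sub_sub]
      exact this
  have hcomm : ∀ t : ℕ, X k ((Y k ^ (t + 1)) y) =
      (qint r (t + 1) * qint r (μ k - t)) • (Y k ^ t) y := by
    intro t
    induction t with
    | zero =>
      have := R.hXY k k _ _ hy
      simp only [hXy, map_zero, sub_zero, if_true] at this
      simp only [zero_add, pow_one, this, Nat.cast_zero, sub_zero, pow_zero, Module.End.one_apply]
      congr 1
      have : qint r 1 = 1 := by simp [qint, inv_mul_cancel₀ hr1]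
      rw [← hr, this, one_mul]
    | succ t ih =>
      have := R.hXY k k _ _ (hmem (t + 1))
      simp only [if_true] at this
      rw [ih, sub_eq_iff_eq_add] at this
      rw [pow_succ' (Y k) (t + 1), Module.End.mul_apply, this, map_smul,
        ← Module.End.mul_apply, ← pow_succ', ← add_smul]
      congr 1
      have := qint_succ r hr0 hr1 (μ k) (t + 1)
      rw [← this, add_comm]
      congr 1
      · push_cast; congr 2; ring
      · rw [← hr]; congr 1; simp [alroot, ha]; ring
  refine ⟨hmem t, hcomm t, ?_⟩
  induction t with
  | zero => intro _; simpa using hy0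
  | succ t ih =>
    intro ht h0
    push_cast at ht
    have h := hcomm t
    rw [h0, map_zero] at h
    rcases smul_eq_zero.mp h.symm with h | h
    · exact (mul_ne_zero (hq _ (by omega)) (hq _ (by omega))) h
    · exact ih (by omega) h

/-- Invariance of the set of weights under simple reflections, dominant case. -/
theorem refl_aux (R : WRep p a d X Y T) [FiniteDimensional ℂ V]
    (hp : p ≠ 0) (hp' : ∀ m : ℤ, m ≠ 0 → p ^ m ≠ 1) (hd : ∀ i, 0 < d i)
    (ha : ∀ i, a i i = 2) {k : Fin n} {μ : Fin n → ℤ} (hμ : T μ ≠ ⊥) (hk : 0 ≤ μ k) :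
    T (μ - μ k • alroot a k) ≠ ⊥ := by
  obtain ⟨x, hx, hx0⟩ := Submodule.exists_mem_ne_zero_of_ne_bot hμ
  have hmem : ∀ t : ℕ, (X k ^ t) x ∈ T (μ + t • alroot a k) := by
    intro t
    induction t with
    | zero => simpa using hx
    | succ t ih =>
      have := R.hX k _ _ ih
      rw [pow_succ', add_smul, one_smul, ← add_assoc]
      exact this
  have hex : ∃ t : ℕ, (X k ^ t) x = 0 := by
    by_contra hcon
    push Not at hcon
    have hfin := Submodule.finite_ne_bot_of_iSupIndep R.indep
    have : Set.Infinite {ν | T ν ≠ ⊥} := by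
      refine Set.infinite_of_injective_forall_mem (f := fun t : ℕ => μ + t • alroot a k) ?_ ?_
      · intro t t' h
        have := congrFun h k
        simp [alroot, ha] at this
        exact this
      · intro t h
        have := hmem t
        rw [h] at this
        exact hcon t (by simpa using this)
    exact this hfin
  classical
  have hr0 : Nat.find hex ≠ 0 := by
    intro h
    have := Nat.find_spec hex
    rw [h] at this
    exact hx0 (by simpa using this)
  obtain ⟨r, hr⟩ := Nat.exists_eq_succ_of_ne_zero hr0
  have hy0 : (X k ^ r) x ≠ 0 := Nat.find_min hex (by omega)
  have hy1 : X k ((X k ^ r) x) = 0 := by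
    have := Nat.find_spec hex
    rwa [hr, Nat.succ_eq_add_one, pow_succ', Module.End.mul_apply] at this
  obtain ⟨m, hm⟩ := Int.eq_ofNat_of_zero_le hk
  obtain ⟨h1, -, h3⟩ := R.sl2 hp hp' hd ha (hmem r) hy0 hy1 (m + r)
  have h4 := h3 (by simp [alroot, ha, hm]; omega)
  intro hbot
  rw [show μ + r • alroot a k - (m + r) • alroot a k = μ - μ k • alroot a k by
    rw [hm, add_smul]; simp, hbot] at h1
  exact h4 (by simpa using h1)

theorem refl (R : WRep p a d X Y T) [FiniteDimensional ℂ V]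
    (hp : p ≠ 0) (hp' : ∀ m : ℤ, m ≠ 0 → p ^ m ≠ 1) (hd : ∀ i, 0 < d i)
    (ha : ∀ i, a i i = 2) {k : Fin n} {μ : Fin n → ℤ} (hμ : T μ ≠ ⊥) :
    T (μ - μ k • alroot a k) ≠ ⊥ := by
  rcases le_total 0 (μ k) with h | h
  · exact R.refl_aux hp hp' hd ha hμ h
  · have := R.dual.refl_aux hp hp' hd ha (k := k) (μ := -μ) (by simpa using hμ) (by simpa using h)
    convert this using 2
    simp; abel

/-- Main abstract statement on the orthogonal of the Demazure module of `s_k ϖ_k`. -/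
theorem key (R : WRep p a d X Y T) [FiniteDimensional ℂ V]
    (hp : p ≠ 0) (hp' : ∀ m : ℤ, m ≠ 0 → p ^ m ≠ 1) (hd : ∀ i, 0 < d i)
    (ha : ∀ i, a i i = 2)
    (hpt : ∀ z : Fin n → ℤ, 0 ≤ z → rtc a z = 0 → z = 0)
    {k₀ : Fin n} {v : V} (hv : v ∈ T (Pi.single k₀ 1)) (hv0 : v ≠ 0) (hXv : ∀ k, X k v = 0)
    (D : Submodule ℂ V) (hD1 : T (Pi.single k₀ 1 - alroot a k₀) ≤ D)
    (hD2 : ∀ k, ∀ x ∈ D, Y k x ∈ D)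
    (hD3 : ∀ N : Submodule ℂ V, T (Pi.single k₀ 1 - alroot a k₀) ≤ N →
      (∀ k, ∀ x ∈ N, Y k x ∈ N) → D ≤ N)
    (ξ : Module.Dual ℂ V) (hξ : ∀ ν, ν ≠ Pi.single k₀ 1 → ∀ x ∈ T ν, ξ x = 0) (hξ0 : ξ ≠ 0) :
    (∀ x ∈ D, ξ x = 0) ∧
      ∀ ξ' : Module.Dual ℂ V, (∀ x ∈ D, ξ' x = 0) → ∃ t : ℂ, ξ' = t • ξ := by
  have hsn : ∀ k, (0 : Fin n → ℤ) ≤ Pi.single k 1 := fun k => by simp [Pi.single_nonneg]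
  have hpos : ∀ (m : Fin n → ℤ) k, 0 ≤ m → rtc a (m + Pi.single k 1) ≠ 0 := by
    intro m k hm h
    have h1 := hpt _ (add_nonneg hm (hsn k)) h
    have h2 := congrFun h1 k
    have h3 := hm k
    simp at h2 h3
    omega
  have hvan : ∀ x ∈ D, ξ x = 0 := by
    have : D ≤ LinearMap.ker ξ := by
      refine (hD3 (Submodule.span ℂ {x | ∃ m : Fin n → ℤ, 0 ≤ m ∧
        x ∈ T (Pi.single k₀ 1 - rtc a (m + Pi.single k₀ 1))}) ?_ ?_).trans ?_
      · intro x hx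
        refine Submodule.subset_span ⟨0, le_rfl, ?_⟩
        simpa [rtc_single] using hx
      · intro k x hx
        have : (Submodule.span ℂ {x | ∃ m : Fin n → ℤ, 0 ≤ m ∧
          x ∈ T (Pi.single k₀ 1 - rtc a (m + Pi.single k₀ 1))}) ≤ (Submodule.span ℂ {x | ∃ m : Fin n → ℤ, 0 ≤ m ∧
          x ∈ T (Pi.single k₀ 1 - rtc a (m + Pi.single k₀ 1))}).comap (Y k) := by
          rw [Submodule.span_le]
          rintro y ⟨m, hm, hy⟩
          refine Submodule.subset_span ⟨m + Pi.single k 1, add_nonneg hm (hsn k), ?_⟩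
          have := R.hY k _ _ hy
          rw [add_right_comm, rtc_add _ _ (Pi.single k 1), rtc_single a k, one_smul, ← sub_sub]
          exact this
        exact this hx
      · rw [Submodule.span_le]
        rintro y ⟨m, hm, hy⟩
        refine hξ _ ?_ y hy
        intro h
        exact hpos m k₀ hm (by simpa using h)
    exact fun x hx => this hx
  refine ⟨hvan, ?_⟩
  have hYv : ∀ k, k ≠ k₀ → Y k v = 0 := by
    intro k hk
    by_contra hne
    have h1 := R.hY k _ _ hv
    have h2 : T (Pi.single k₀ 1 - alroot a k) ≠ ⊥ := by
      intro h
      rw [h] at h1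
      exact hne (by simpa using h1)
    have h3 := R.refl hp hp' hd ha (k := k) h2
    obtain ⟨m, hm, h4⟩ := R.weights hv hv0 hXv h3
    apply hpos m k hm
    rw [rtc_add, rtc_single]
    have e : ((Pi.single k₀ 1 : Fin n → ℤ) - alroot a k) k = -2 := by
      simp [alroot, ha, hk]
    rw [e] at h4
    have : rtc a m = Pi.single k₀ 1 - ((Pi.single k₀ 1 : Fin n → ℤ) - alroot a k - (-2 : ℤ) • alroot a k) := by
      rw [h4]; abel
    rw [this]; module
  have hdec : (⊤ : Submodule ℂ V) ≤ Submodule.span ℂ {v} ⊔ D := by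
    rw [← R.span_low hv hv0 hXv, Submodule.span_le]
    have hl : ∀ l, l = [] ∨ low Y v l ∈ D := by
      intro l
      induction l with
      | nil => exact Or.inl rfl
      | cons k l ih =>
        right
        rcases ih with rfl | h
        · by_cases hk : k = k₀
          · subst hk
            exact hD1 (R.hY _ _ _ hv)
          · have : low Y v [k] = 0 := hYv k hk
            rw [this]; exact D.zero_mem
        · exact hD2 k _ h
    rintro _ ⟨l, rfl⟩
    rcases hl l with rfl | h
    · exact Submodule.mem_sup_left (Submodule.mem_span_singleton_self v)
    · exact Submodule.mem_sup_right h
  have hdec' : ∀ x, ∃ t : ℂ, ∃ y ∈ D, x = t • v + y := by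
    intro x
    obtain ⟨y, hy, z, hz, h⟩ := Submodule.mem_sup.mp (hdec (Submodule.mem_top (x := x)))
    obtain ⟨t, rfl⟩ := Submodule.mem_span_singleton.mp hy
    exact ⟨t, z, hz, h.symm⟩
  have hξv : ξ v ≠ 0 := by
    intro h
    apply hξ0
    ext x
    obtain ⟨t, y, hy, rfl⟩ := hdec' x
    simp [h, hvan y hy]
  intro ξ' hξ'
  refine ⟨ξ' v / ξ v, ?_⟩
  ext x
  obtain ⟨t, y, hy, rfl⟩ := hdec' x
  simp [hvan y hy, hξ' y hy]
  field_simp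

end WRep

/-! ### Weyl group combinatorics -/

/-- The invariant pairing between weights and root coordinates. -/
def wpair {n : ℕ} (d : Fin n → ℕ) (μ x : Fin n → ℤ) : ℤ := ∑ j, (d j : ℤ) * μ j * x j

theorem wpair_single_left {n : ℕ} (d : Fin n → ℕ) (j : Fin n) (t : ℤ) (x : Fin n → ℤ) :
    wpair d (Pi.single j t) x = d j * t * x j := by
  unfold wpair
  rw [Finset.sum_eq_single j]
  · simp
  · intro b _ hb; simp [hb]
  · simp

theorem wpair_single_right {n : ℕ} (d : Fin n → ℕ) (j : Fin n) (t : ℤ) (μ : Fin n → ℤ) :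
    wpair d μ (Pi.single j t) = d j * μ j * t := by
  unfold wpair
  rw [Finset.sum_eq_single j]
  · simp
  · intro b _ hb; simp [hb]
  · simp

theorem wpair_sub_left {n : ℕ} (d : Fin n → ℕ) (μ ν x : Fin n → ℤ) :
    wpair d (μ - ν) x = wpair d μ x - wpair d ν x := by
  simp [wpair, mul_sub, sub_mul, Finset.sum_sub_distrib]

theorem wpair_sub_right {n : ℕ} (d : Fin n → ℕ) (μ x y : Fin n → ℤ) :
    wpair d μ (x - y) = wpair d μ x - wpair d μ y := by
  simp [wpair, mul_sub, Finset.sum_sub_distrib]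

theorem wpair_neg_left {n : ℕ} (d : Fin n → ℕ) (μ x : Fin n → ℤ) :
    wpair d (-μ) x = - wpair d μ x := by
  simp [wpair]

/-- The Weyl group data. -/
structure WData {n : ℕ} (a : Fin n → Fin n → ℤ) (d : Fin n → ℕ) {W : Type} [Group W]
    (S : W → (Fin n → ℤ) →+ (Fin n → ℤ)) (s : Fin n → W) (w₀ : W) : Prop where
  diag : ∀ i, a i i = 2
  dpos : ∀ i, 0 < d i
  symm : ∀ i j, (d i : ℤ) * a i j = (d j : ℤ) * a j i
  S_mul : ∀ w w' μ, S (w * w') μ = S w (S w' μ)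
  S_one : ∀ μ, S 1 μ = μ
  refl : ∀ i μ, S (s i) μ = μ - μ i • alroot a i
  ind : ∀ Q : W → Prop, Q 1 → (∀ i w, Q w → Q (s i * w)) → ∀ w, Q w
  long : ∀ μ : Fin n → ℤ, 0 ≤ μ → S w₀ μ ≤ 0

namespace WData

variable {n : ℕ} {a : Fin n → Fin n → ℤ} {d : Fin n → ℕ} {W : Type} [Group W]
    {S : W → (Fin n → ℤ) →+ (Fin n → ℤ)} {s : Fin n → W} {w₀ : W}

theorem wpair_alroot (D : WData a d S s w₀) (i : Fin n) (t : ℤ) (x : Fin n → ℤ) :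
    wpair d (t • alroot a i) x = t * (d i * rtc a x i) := by
  simp only [wpair, rtc, alroot, Pi.smul_apply, smul_eq_mul, Finset.mul_sum]
  refine Finset.sum_congr rfl fun j _ => ?_
  linear_combination t * x j * D.symm j i

theorem transport (D : WData a d S s w₀) (w : W) (x : Fin n → ℤ) :
    ∃ x', S w (rtc a x) = rtc a x' ∧ ∀ μ, wpair d (S w μ) x' = wpair d μ x := by
  revert w
  refine D.ind _ ⟨x, D.S_one _, fun μ => by rw [D.S_one]⟩ ?_
  rintro i w ⟨x', h1, h2⟩
  refine ⟨x' - Pi.single i (rtc a x' i), ?_, fun μ => ?_⟩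
  · rw [D.S_mul, h1, D.refl, sub_eq_add_neg x', rtc_add, rtc_neg, rtc_single, sub_eq_add_neg]
  · rw [D.S_mul, D.refl, ← h2 μ, wpair_sub_left, wpair_sub_right, D.wpair_alroot,
      sub_eq_add_neg x', rtc_add, rtc_neg, rtc_single, wpair_single_right]
    simp [alroot, D.diag]
    ring

theorem pointed (D : WData a d S s w₀) (z : Fin n → ℤ) (hz : 0 ≤ z) (h0 : rtc a z = 0) :
    z = 0 := by
  have hinv : ∀ w μ, wpair d (S w μ) z = wpair d μ z := by
    refine D.ind _ (fun μ => by rw [D.S_one]) ?_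
    intro i w h μ
    rw [D.S_mul, D.refl, wpair_sub_left, D.wpair_alroot, h0, h]
    simp
  funext j
  have h1 := hinv w₀ (Pi.single j 1)
  have h2 := D.long (Pi.single j 1) (by simp [Pi.single_nonneg])
  rw [wpair_single_left] at h1
  have h3 : wpair d (S w₀ (Pi.single j 1)) z ≤ 0 := by
    refine Finset.sum_nonpos fun l _ => ?_
    have := h2 l
    have h5 := hz l
    simp only [Pi.zero_apply] at this h5
    exact mul_nonpos_of_nonpos_of_nonneg (mul_nonpos_of_nonneg_of_nonpos (by positivity) this) h5
  have h4 := hz j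
  have h6 := D.dpos j
  rw [h1, mul_one] at h3
  have h7 : (0 : ℤ) < d j := by exact_mod_cast h6
  simp only [Pi.zero_apply] at h4 ⊢
  nlinarith

theorem S_inv (D : WData a d S s w₀) (w : W) (μ : Fin n → ℤ) : S w⁻¹ (S w μ) = μ := by
  rw [← D.S_mul, inv_mul_cancel, D.S_one]

/-- The lowest weight property of `w₀ c`. -/
theorem lowest (D : WData a d S s w₀) (c : Fin n → ℤ) (P : (Fin n → ℤ) → Prop)
    (hP : ∀ μ, P μ → ∀ i, P (μ - μ i • alroot a i))
    (hP' : ∀ μ, P μ → ∃ m : Fin n → ℤ, 0 ≤ m ∧ μ = c - rtc a m) (k : Fin n) :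
    ¬ P (S w₀ c - alroot a k) := by
  intro h
  have hW : ∀ w μ, P μ → P (S w μ) := by
    refine D.ind _ (fun μ h => by rwa [D.S_one]) ?_
    intro i w ih μ hμ
    rw [D.S_mul, D.refl]
    exact hP _ (ih μ hμ) i
  obtain ⟨m, hm, e⟩ := hP' _ (hW w₀⁻¹ _ h)
  obtain ⟨x, hx1, hx2⟩ := D.transport w₀⁻¹ (Pi.single k 1)
  rw [rtc_single, one_smul] at hx1
  rw [map_sub, D.S_inv, hx1] at e
  have hx : x ≤ 0 := by
    intro j
    have h1 := hx2 (S w₀ (Pi.single j 1))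
    rw [D.S_inv, wpair_single_left, wpair_single_right] at h1
    have h2 := D.long (Pi.single j 1) (by simp [Pi.single_nonneg]) k
    have h3 : (0 : ℤ) < d j := by exact_mod_cast D.dpos j
    have h4 : (0 : ℤ) < d k := by exact_mod_cast D.dpos k
    simp only [Pi.zero_apply] at h2 ⊢
    nlinarith
  have hz := D.pointed (m + (-x)) (add_nonneg hm (neg_nonneg.mpr hx))
    (by rw [rtc_add, rtc_neg, ← sub_eq_add_neg, sub_eq_zero]; exact (sub_right_injective e).symm)
  have hx0 : x = 0 := by
    refine le_antisymm hx ?_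
    have : x = m := by rw [← sub_eq_add_neg, sub_eq_zero] at hz; exact hz.symm
    rw [this]; exact hm
  have hα : alroot a k = 0 := by
    have := congrArg (S w₀) hx1
    rw [← D.S_mul, mul_inv_cancel, D.S_one, hx0, rtc_zero, map_zero] at this
    exact this
  have := congrFun hα k
  simp [alroot, D.diag] at this

theorem sq (D : WData a d S s w₀) [Finite W]
    (hP : ∀ c : Fin n → ℤ, 0 ≤ c → ∀ w, ∃ m : Fin n → ℤ, 0 ≤ m ∧ S w c = c - rtc a m)
    (c : Fin n → ℤ) (hc : 0 ≤ c) : S (w₀ * w₀) c = c := by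
  set w := w₀ * w₀ with hw
  have hdom : ∀ μ : Fin n → ℤ, 0 ≤ μ → 0 ≤ S w μ := by
    intro μ hμ
    have := D.long (- S w₀ μ) (neg_nonneg.mpr (D.long μ hμ))
    rw [map_neg, neg_nonpos] at this
    rwa [hw, D.S_mul]
  obtain ⟨m, hm, e⟩ := hP c hc w
  have hpow : ∀ N : ℕ, 0 ≤ S (w ^ N) c ∧
      ∃ m' : Fin n → ℤ, 0 ≤ m' ∧ S (w ^ (N + 1)) c = c - rtc a (m + m') := by
    intro N
    induction N with
    | zero => exact ⟨by rwa [pow_zero, D.S_one], 0, le_rfl, by simpa using e⟩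
    | succ N ih =>
      obtain ⟨h1, m', hm', h2⟩ := ih
      have h3 : 0 ≤ S (w ^ (N + 1)) c := by
        rw [pow_succ', D.S_mul]; exact hdom _ h1
      obtain ⟨m'', hm'', h4⟩ := hP _ h3 w
      refine ⟨h3, m' + m'', add_nonneg hm' hm'', ?_⟩
      rw [pow_succ', D.S_mul, h4, h2, ← add_assoc, rtc_add a (m + m')]
      abel
  obtain ⟨N, hN, hN1⟩ := (isOfFinOrder_of_finite w).exists_pow_eq_one
  obtain ⟨N, rfl⟩ := Nat.exists_eq_succ_of_ne_zero hN.ne'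
  obtain ⟨-, m', hm', h⟩ := hpow N
  rw [Nat.succ_eq_add_one] at hN1
  rw [hN1, D.S_one] at h
  have h0 := D.pointed (m + m') (add_nonneg hm hm') (by simpa using h.symm)
  have hm0 : m = 0 := by
    refine le_antisymm ?_ hm
    have : m = -m' := eq_neg_of_add_eq_zero_left h0
    rw [this]; exact neg_nonpos.mpr hm'
  rw [e, hm0, rtc_zero, sub_zero]

theorem expand (f : (Fin n → ℤ) →+ (Fin n → ℤ)) (μ : Fin n → ℤ) :
    f μ = ∑ j, μ j • f (Pi.single j 1) := by
  conv_lhs => rw [← Finset.univ_sum_single μ]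
  rw [map_sum]
  refine Finset.sum_congr rfl fun j _ => ?_
  rw [← map_zsmul]
  congr 1
  funext l
  by_cases h : l = j
  · subst h; simp
  · simp [h]

theorem tau (D : WData a d S s w₀)
    (hsq : ∀ c : Fin n → ℤ, 0 ≤ c → S (w₀ * w₀) c = c) (i : Fin n) :
    ∃ k, S w₀ (Pi.single i 1) = - Pi.single k 1 := by
  have hsn : ∀ k, (0 : Fin n → ℤ) ≤ Pi.single k 1 := fun k => by simp [Pi.single_nonneg]
  set b : Fin n → ℤ := - S w₀ (Pi.single i 1) with hb
  have hbn : 0 ≤ b := neg_nonneg.mpr (D.long _ (hsn i))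
  let g : Fin n → ℤ := fun k => ∑ l, (- S w₀ (Pi.single k 1)) l
  have hg : ∀ k, 1 ≤ g k := by
    intro k
    have h0 : 0 ≤ - S w₀ (Pi.single k 1) := neg_nonneg.mpr (D.long _ (hsn k))
    by_contra hlt
    have h1 : g k = 0 := le_antisymm (by omega) (Finset.sum_nonneg fun l _ => h0 l)
    have h2 := (Finset.sum_eq_zero_iff_of_nonneg (fun l _ => h0 l)).mp h1
    have h3 : S w₀ (Pi.single k 1) = 0 := by
      funext l
      have := h2 l (Finset.mem_univ l)
      simpa using this
    have h4 := hsq _ (hsn k)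
    rw [D.S_mul, h3, map_zero] at h4
    have := congrFun h4 k
    simp at this
  have hsum : ∑ k, b k * g k = 1 := by
    have h1 := hsq _ (hsn i)
    rw [D.S_mul, show S w₀ (Pi.single i 1) = -b by simp [hb], map_neg, expand] at h1
    have h2 : ∑ l, (Pi.single i 1 : Fin n → ℤ) l = 1 := by simp
    rw [← h1] at h2
    rw [← h2]
    simp only [g, Finset.mul_sum, Pi.neg_apply, Finset.sum_apply, Pi.smul_apply, smul_eq_mul]
    rw [Finset.sum_comm]
    simp
  have hex : ∃ k, b k ≠ 0 := by
    by_contra h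
    push Not at h
    simp [h] at hsum
  obtain ⟨k, hk⟩ := hex
  have hk1 : 1 ≤ b k := by
    have := hbn k
    simp only [Pi.zero_apply] at this
    omega
  have hterm : ∀ l, 0 ≤ b l * g l := fun l => mul_nonneg (hbn l) (by have := hg l; omega)
  rw [← Finset.add_sum_erase _ _ (Finset.mem_univ k)] at hsum
  have hrest : 0 ≤ ∑ l ∈ Finset.univ.erase k, b l * g l := Finset.sum_nonneg fun l _ => hterm l
  have hkk : 1 ≤ b k * g k := by have := hg k; nlinarith
  have hr0 : ∑ l ∈ Finset.univ.erase k, b l * g l = 0 := by omega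
  have hbk : b k = 1 := by have := hg k; nlinarith
  refine ⟨k, ?_⟩
  have : b = Pi.single k 1 := by
    funext l
    by_cases hl : l = k
    · subst hl; simpa using hbk
    · have := (Finset.sum_eq_zero_iff_of_nonneg (fun l _ => hterm l)).mp hr0 l (by simp [hl])
      have h2 := hg l
      rcases mul_eq_zero.mp this with h | h
      · simp [h, hl]
      · omega
  rw [← this]; simp [hb]

theorem tau_root (D : WData a d S s w₀)
    (hsq : ∀ c : Fin n → ℤ, 0 ≤ c → S (w₀ * w₀) c = c) {i k : Fin n}
    (hk : S w₀ (Pi.single i 1) = - Pi.single k 1) :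
    S w₀ (alroot a i) = - alroot a k := by
  have hsn : ∀ k, (0 : Fin n → ℤ) ≤ Pi.single k 1 := fun k => by simp [Pi.single_nonneg]
  choose τ hτ using D.tau hsq
  have hττ : ∀ l, S w₀ (Pi.single (τ l) 1) = - Pi.single l 1 := by
    intro l
    have := hsq _ (hsn l)
    rw [D.S_mul, hτ, map_neg] at this
    rw [← this]; simp
  have hinj : ∀ l l' : Fin n, (- Pi.single l 1 : Fin n → ℤ) = - Pi.single l' 1 → l = l' := by
    intro l l' h
    by_contra hne
    have := congrFun h l
    simp [hne] at this
  have hki : k = τ i := hinj _ _ (hk.symm.trans (hτ i))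
  have hτinj : ∀ l l', τ l = τ l' → l = l' := by
    intro l l' h
    have h1 := hττ l
    rw [h, hττ l'] at h1
    exact (hinj _ _ h1).symm
  obtain ⟨x, hx1, hx2⟩ := D.transport w₀ (Pi.single i 1)
  rw [rtc_single, one_smul] at hx1
  have hxl : ∀ l, l ≠ k → x l = 0 := by
    intro l hl
    have h1 := hx2 (Pi.single (τ l) 1)
    have h3 : τ l ≠ i := by
      intro h
      apply hl
      have h4 := hττ l
      rw [h, hτ i] at h4
      rw [hki]; exact (hinj _ _ h4).symm
    rw [hττ, wpair_neg_left, wpair_single_left, wpair_single_left] at h1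
    have h2 : (0 : ℤ) < d l := by exact_mod_cast D.dpos l
    simp [h3] at h1
    rcases h1 with h1 | h1
    · omega
    · exact h1
  have hx : x = Pi.single k (x k) := by
    funext l
    by_cases hl : l = k
    · subst hl; simp
    · simp [hl, hxl l hl]
  rw [hx, rtc_single] at hx1
  have h1 : S w₀ (alroot a i) k = -2 := by
    rw [expand, Finset.sum_apply, Finset.sum_eq_single i]
    · rw [hk]; simp [alroot, D.diag]
    · intro j _ hj
      have : k ≠ τ j := by
        rw [hki]; intro h; exact hj (hτinj _ _ h).symm
      rw [hτ]; simp [this]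
    · simp
  have h2 := congrFun hx1 k
  rw [h1] at h2
  simp [alroot, D.diag] at h2
  have h3 : x k = -1 := by omega
  rw [hx1, h3]; simp

end WData

/-! ### Assembling -/

theorem WRep.top_of_stable {p : ℂ} {n : ℕ} {a : Fin n → Fin n → ℤ} {d : Fin n → ℕ}
    {V : Type} [AddCommGroup V] [Module ℂ V] {X Y : Fin n → Module.End ℂ V}
    {T : (Fin n → ℤ) → Submodule ℂ V} (R : WRep p a d X Y T) {lam : Fin n → ℤ} {v : V}
    (hv : v ∈ T lam) (hv0 : v ≠ 0) (hXv : ∀ k, X k v = 0) (D : Submodule ℂ V) (hD1 : v ∈ D)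
    (hD2 : ∀ k, ∀ x ∈ D, Y k x ∈ D) : D = ⊤ := by
  rw [← top_le_iff, ← R.span_low hv hv0 hXv, Submodule.span_le]
  rintro _ ⟨l, rfl⟩
  induction l with
  | nil => exact hD1
  | cons k l ih => exact hD2 k _ ih

theorem transc_ne_zero {q : ℂ} (hq : Transcendental ℚ q) : q ≠ 0 := by
  rintro rfl
  exact hq isAlgebraic_zero

theorem transc_zpow {q : ℂ} (hq : Transcendental ℚ q) (m : ℤ) (hm : m ≠ 0) : q ^ m ≠ 1 := by
  intro h
  have key : ∀ N : ℕ, 0 < N → q ^ N ≠ 1 := by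
    intro N hN h1
    have := hq.pow hN
    rw [h1] at this
    exact this isAlgebraic_one
  obtain ⟨N, rfl | rfl⟩ := m.eq_nat_or_neg
  · exact key N (by omega) (by simpa using h)
  · exact key N (by omega) (by simpa using h)

section dem

variable {q : ℂ} {n : ℕ} {d : Fin n → ℕ} {U : Type} [Ring U] [Algebra ℂ U] {K : Fin n → Uˣ}
  {Vc : Type} [AddCommGroup Vc] [Module ℂ Vc] {ρ : U →ₐ[ℂ] Module.End ℂ Vc}

theorem mem_wtSp {μ : Fin n → ℤ} {x : Vc} :
    x ∈ wtSp q d K ρ μ ↔ ∀ i, ρ (K i : U) x = (q ^ (μ i * (d i : ℤ))) • x := by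
  simp [wtSp, Submodule.mem_iInf, sub_eq_zero]

theorem dem_le (G : Fin n → U) (ν : Fin n → ℤ) :
    wtSp q d K ρ ν ≤ demazure q d (Set.range G) K ρ ν := by
  intro x hx
  exact Submodule.subset_span ⟨1, one_mem _, x, hx, by simp⟩

theorem dem_stable (G : Fin n → U) (ν : Fin n → ℤ) (k : Fin n) :
    ∀ x ∈ demazure q d (Set.range G) K ρ ν, ρ (G k) x ∈ demazure q d (Set.range G) K ρ ν := by
  have : demazure q d (Set.range G) K ρ ν ≤
      (demazure q d (Set.range G) K ρ ν).comap (ρ (G k)) := by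
    refine Submodule.span_le.mpr ?_
    rintro _ ⟨y, hy, u, hu, rfl⟩
    refine Submodule.subset_span ⟨G k * y, mul_mem (Algebra.subset_adjoin ⟨k, rfl⟩) hy, u, hu, ?_⟩
    simp
  exact this

theorem stable_adjoin (N : Submodule ℂ Vc) (s : Set U) (hs : ∀ g ∈ s, ∀ x ∈ N, ρ g x ∈ N)
    (y : U) (hy : y ∈ Algebra.adjoin ℂ s) : ∀ x ∈ N, ρ y x ∈ N := by
  induction hy using Algebra.adjoin_induction with
  | mem g hg => exact hs g hg
  | algebraMap r =>
    intro x hx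
    rw [AlgHom.commutes, Module.algebraMap_end_apply]
    exact N.smul_mem _ hx
  | add y z _ _ h1 h2 =>
    intro x hx
    rw [map_add]
    exact N.add_mem (h1 x hx) (h2 x hx)
  | mul y z _ _ h1 h2 =>
    intro x hx
    rw [map_mul]
    exact h1 _ (h2 x hx)

theorem dem_min (G : Fin n → U) (ν : Fin n → ℤ) (N : Submodule ℂ Vc)
    (h1 : wtSp q d K ρ ν ≤ N) (h2 : ∀ k, ∀ x ∈ N, ρ (G k) x ∈ N) :
    demazure q d (Set.range G) K ρ ν ≤ N := by
  refine Submodule.span_le.mpr ?_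
  rintro _ ⟨y, hy, u, hu, rfl⟩
  refine stable_adjoin N (Set.range G) ?_ y hy u (h1 hu)
  rintro _ ⟨k, rfl⟩
  exact h2 k

end dem

/-- Universality implies that `U` is generated by the `E`, `F`, `K^{±1}`. -/
theorem Uq_gen (q : ℂ) (n : ℕ) (a : Fin n → Fin n → ℤ) (d : Fin n → ℕ)
    (U : Type) [Ring U] [Algebra ℂ U]
    (E F : Fin n → U) (K : Fin n → Uˣ)
    (hrel : UqRels q a d U E F K)
    (hUuniv : ∀ (B : Type) [Ring B] [Algebra ℂ B] (E' F' : Fin n → B) (K' : Fin n → Bˣ),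
      UqRels q a d B E' F' K' → ∃! φ : U →ₐ[ℂ] B,
        (∀ i, φ (E i) = E' i) ∧ (∀ i, φ (F i) = F' i) ∧ (∀ i, φ (K i : U) = (K' i : B))) :
    Algebra.adjoin ℂ (Set.range E ∪ Set.range F ∪ Set.range (fun i => (K i : U)) ∪
      Set.range (fun i => (((K i)⁻¹ : Uˣ) : U))) = ⊤ := by
  set B := Algebra.adjoin ℂ (Set.range E ∪ Set.range F ∪ Set.range (fun i => (K i : U)) ∪
      Set.range (fun i => (((K i)⁻¹ : Uˣ) : U))) with hB
  have hE : ∀ i, E i ∈ B := fun i => Algebra.subset_adjoin (by simp)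
  have hF : ∀ i, F i ∈ B := fun i => Algebra.subset_adjoin (by simp)
  have hK : ∀ i, (K i : U) ∈ B := fun i => Algebra.subset_adjoin (by simp)
  have hK' : ∀ i, (((K i)⁻¹ : Uˣ) : U) ∈ B := fun i => Algebra.subset_adjoin (by simp)
  let E' : Fin n → B := fun i => ⟨E i, hE i⟩
  let F' : Fin n → B := fun i => ⟨F i, hF i⟩
  let K' : Fin n → Bˣ := fun i => ⟨⟨K i, hK i⟩, ⟨_, hK' i⟩, by ext; simp, by ext; simp⟩
  have hr : UqRels q a d B E' F' K' := by
    obtain ⟨h1, h2, h3, h4, h5, h6⟩ := hrel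
    refine ⟨fun i j => Subtype.ext (h1 i j), fun i j => Subtype.ext (h2 i j),
      fun i j => Subtype.ext (h3 i j), fun i j => Subtype.ext ?_, fun i j hij => Subtype.ext ?_,
      fun i j hij => Subtype.ext ?_⟩
    · have := h4 i j
      by_cases h : i = j
      · simp only [h, if_true] at this ⊢
        exact this
      · simp only [h, if_false] at this ⊢
        exact this
    · have := h5 i j hij
      rw [← B.coe_val, map_sum]
      simpa using this
    · have := h6 i j hij
      rw [← B.coe_val, map_sum]
      simpa using this
  obtain ⟨φ, ⟨p1, p2, p3⟩, -⟩ := hUuniv B E' F' K' hr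
  have := (hUuniv U E F K hrel).unique (y₁ := B.val.comp φ) (y₂ := AlgHom.id ℂ U)
    ⟨fun i => by simp [p1, E'], fun i => by simp [p2, F'], fun i => by simp [p3, K']⟩
    ⟨fun i => rfl, fun i => rfl, fun i => rfl⟩
  rw [eq_top_iff]
  intro x _
  have h := DFunLike.congr_fun this x
  simp only [AlgHom.comp_apply, AlgHom.id_apply] at h
  rw [← h]
  exact (φ x).2

theorem wrep_of (q : ℂ) (hq : Transcendental ℚ q) (n : ℕ) (a : Fin n → Fin n → ℤ) (d : Fin n → ℕ)
    (hd_pos : ∀ i, 0 < d i)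
    (U : Type) [Ring U] [Algebra ℂ U]
    (E F : Fin n → U) (K : Fin n → Uˣ)
    (hrel : UqRels q a d U E F K)
    (hgen : Algebra.adjoin ℂ (Set.range E ∪ Set.range F ∪ Set.range (fun i => (K i : U)) ∪
      Set.range (fun i => (((K i)⁻¹ : Uˣ) : U))) = ⊤)
    (V : Type) [AddCommGroup V] [Module ℂ V] (ρ : U →ₐ[ℂ] Module.End ℂ V)
    (hsimple : ∀ (N : Submodule ℂ V), (∀ (u : U), ∀ v ∈ N, ρ u v ∈ N) → N = ⊥ ∨ N = ⊤) :
    WRep q a d (fun k => ρ (E k)) (fun k => ρ (F k)) (wtSp q d K ρ) := by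
  obtain ⟨h1, h2, h3, h4, -, -⟩ := hrel
  have hq0 := transc_ne_zero hq
  have hKinv : ∀ μ x, x ∈ wtSp q d K ρ μ → ∀ i,
      ρ (((K i)⁻¹ : Uˣ) : U) x = (q ^ (-(μ i * (d i : ℤ)))) • x := by
    intro μ x hx i
    have := mem_wtSp.mp hx i
    have h : ρ (((K i)⁻¹ : Uˣ) : U) (ρ (K i : U) x) = x := by
      rw [← Module.End.mul_apply, ← map_mul]; simp
    rw [this, map_smul] at h
    conv_rhs => rw [← h]
    rw [smul_smul, ← zpow_add₀ hq0]; simp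
  refine ⟨?_, ?_, ?_, ?_, ?_⟩
  · intro k μ x hx
    rw [mem_wtSp] at hx ⊢
    intro i
    have e := congrArg (fun u => ρ u x) (h2 i k)
    simp only [map_mul, map_smul, Module.End.mul_apply, LinearMap.smul_apply, hx i] at e
    rw [e, smul_smul, ← zpow_add₀ hq0]
    congr 2
    simp [alroot]; ring
  · intro k μ x hx
    rw [mem_wtSp] at hx ⊢
    intro i
    have e := congrArg (fun u => ρ u x) (h3 i k)
    simp only [map_mul, map_smul, Module.End.mul_apply, LinearMap.smul_apply, hx i] at e
    rw [e, smul_smul, ← zpow_add₀ hq0]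
    congr 2
    simp [alroot]; ring
  · intro i j μ x hx
    have e := congrArg (fun u => ρ u x) (h4 i j)
    simp only [map_sub, map_mul, Module.End.mul_apply, LinearMap.sub_apply] at e
    rw [e]
    by_cases h : i = j
    · subst h
      simp only [if_true, map_smul, map_sub, LinearMap.smul_apply, LinearMap.sub_apply,
        hKinv μ x hx, mem_wtSp.mp hx i]
      rw [← sub_smul, smul_smul, qint, ← zpow_mul, ← zpow_mul, ← zpow_neg, mul_comm (d i : ℤ),
        mul_comm (d i : ℤ), neg_mul]
    · simp [h]
  · have hind := Module.End.independent_iInf_maxGenEigenspace_of_forall_mapsTo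
      (fun i => ρ (K i : U)) (by
        intro i j φ
        apply Module.End.mapsTo_maxGenEigenspace_of_comm
        rw [commute_iff_eq, ← map_mul, ← map_mul, h1])
    have hinj : Function.Injective (fun (μ : Fin n → ℤ) (i : Fin n) => q ^ (μ i * (d i : ℤ))) := by
      intro μ ν h
      funext i
      have e : q ^ (μ i * (d i : ℤ)) = q ^ (ν i * (d i : ℤ)) := congrFun h i
      by_contra hne
      have hdi : (d i : ℤ) ≠ 0 := by have := hd_pos i; omega
      apply transc_zpow hq ((μ i - ν i) * d i) (mul_ne_zero (sub_ne_zero.mpr hne) hdi)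
      rw [sub_mul, zpow_sub₀ hq0, e, div_self (zpow_ne_zero _ hq0)]
    refine (hind.comp hinj).mono ?_
    intro μ x hx
    rw [mem_wtSp] at hx
    simp only [Function.comp, Submodule.mem_iInf]
    intro i
    have : x ∈ (ρ (K i : U)).eigenspace (q ^ (μ i * (d i : ℤ))) :=
      Module.End.mem_eigenspace_iff.mpr (hx i)
    exact Module.End.eigenspace_le_maxGenEigenspace this
  · intro S hS hX hY
    apply hsimple
    intro u
    refine stable_adjoin _ _ ?_ u (hgen ▸ Algebra.mem_top)
    rintro g (((⟨k, rfl⟩ | ⟨k, rfl⟩) | ⟨k, rfl⟩) | ⟨k, rfl⟩)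
    · exact hX k
    · exact hY k
    · have : Submodule.span ℂ S ≤ (Submodule.span ℂ S).comap (ρ (K k : U)) := by
        rw [Submodule.span_le]
        intro x hx
        obtain ⟨μ, hμ⟩ := hS x hx
        change ρ (K k : U) x ∈ Submodule.span ℂ S
        rw [mem_wtSp.mp hμ k]
        exact Submodule.smul_mem _ _ (Submodule.subset_span hx)
      exact this
    · have : Submodule.span ℂ S ≤ (Submodule.span ℂ S).comap (ρ (((K k)⁻¹ : Uˣ) : U)) := by
        rw [Submodule.span_le]
        intro x hx
        obtain ⟨μ, hμ⟩ := hS x hx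
        change ρ (((K k)⁻¹ : Uˣ) : U) x ∈ Submodule.span ℂ S
        rw [hKinv μ x hμ k]
        exact Submodule.smul_mem _ _ (Submodule.subset_span hx)
      exact this

theorem span_zero_aux {A : Type} [Ring A] (s : Set A) (h : ∀ y ∈ s, y = 0) :
    TwoSidedIdeal.span s = ⊥ := by
  rw [eq_bot_iff, TwoSidedIdeal.span_le]
  intro y hy
  rw [h y hy]
  exact zero_mem _

theorem span_single_aux {A : Type} [Ring A] [Algebra ℂ A] (s : Set A) (x : A) (hx : x ∈ s)
    (h : ∀ y ∈ s, ∃ t : ℂ, y = t • x) : TwoSidedIdeal.span s = TwoSidedIdeal.span {x} := by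
  apply le_antisymm
  · rw [TwoSidedIdeal.span_le]
    intro y hy
    obtain ⟨t, rfl⟩ := h y hy
    rw [Algebra.smul_def]
    exact TwoSidedIdeal.mul_mem_left _ _ _ (TwoSidedIdeal.subset_span rfl)
  · rw [TwoSidedIdeal.span_le]
    rintro _ rfl
    exact TwoSidedIdeal.subset_span hx

theorem cast_single {n : ℕ} (j : Fin n) :
    (fun k => ((Pi.single j 1 : Fin n → ℕ) k : ℤ)) = Pi.single j 1 := by
  funext k
  by_cases h : k = j
  · subst h; simp
  · simp [h]

theorem generator_height_one_H_primes
    -- the deformation parameter: a transcendental complex number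
    (q : ℂ) (hq : Transcendental ℚ q)
    -- Cartan data of the complex semisimple Lie algebra 𝔤 of rank n
    (n : ℕ) (hn : 0 < n) (a : Fin n → Fin n → ℤ) (d : Fin n → ℕ)
    (ha_diag : ∀ i, a i i = 2) (ha_off : ∀ i j, i ≠ j → a i j ≤ 0)
    (ha_zero : ∀ i j, a i j = 0 ↔ a j i = 0)
    (hd_pos : ∀ i, 0 < d i)
    (ha_symm : ∀ i j, (d i : ℤ) * a i j = (d j : ℤ) * a j i)
    -- the quantised enveloping algebra U = U_q(𝔤): carries elements E i, F i and units K i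
    -- satisfying the defining relations, and is universal for these relations
    (U : Type) [Ring U] [Algebra ℂ U]
    (E F : Fin n → U) (K : Fin n → Uˣ)
    (hrel : UqRels q a d U E F K)
    (hUuniv : ∀ (B : Type) [Ring B] [Algebra ℂ B] (E' F' : Fin n → B) (K' : Fin n → Bˣ),
      UqRels q a d B E' F' K' → ∃! φ : U →ₐ[ℂ] B,
        (∀ i, φ (E i) = E' i) ∧ (∀ i, φ (F i) = F' i) ∧ (∀ i, φ (K i : U) = (K' i : B)))
    -- the Hopf algebra structure of U_q(𝔤)
    (Δ : U →ₐ[ℂ] U ⊗[ℂ] U) (ε : U →ₐ[ℂ] ℂ)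
    (hΔE : ∀ i, Δ (E i) = E i ⊗ₜ 1 + (K i : U) ⊗ₜ E i)
    (hΔF : ∀ i, Δ (F i) = F i ⊗ₜ (((K i)⁻¹ : Uˣ) : U) + 1 ⊗ₜ F i)
    (hΔK : ∀ i, Δ (K i : U) = (K i : U) ⊗ₜ (K i : U))
    (hεE : ∀ i, ε (E i) = 0) (hεF : ∀ i, ε (F i) = 0) (hεK : ∀ i, ε (K i : U) = 1)
    -- the Weyl group W, acting faithfully on the weight lattice P = ℤⁿ (coordinates taken in
    -- the basis of fundamental weights ϖ i), generated by the simple reflections s i, with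
    -- longest element w₀ (characterised by: w₀ maps dominant weights to antidominant ones)
    (W : Type) [Group W] [Finite W] (σ : W →* Multiplicative (AddAut (Fin n → ℤ)))
    (hσinj : Function.Injective σ)
    (s : Fin n → W) (hsgen : Subgroup.closure (Set.range s) = ⊤)
    (hs : ∀ i (μ : Fin n → ℤ), σ (s i) μ = fun k => μ k - μ i * a k i)
    (w₀ : W) (hw₀ : ∀ μ : Fin n → ℤ, (∀ i, 0 ≤ μ i) → ∀ i, σ w₀ μ i ≤ 0)
    -- the simple finite-dimensional modules V(λ) of highest weight λ = ∑ c i ϖ i ∈ P⁺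
    (V : (Fin n → ℕ) → Type) [∀ c, AddCommGroup (V c)] [∀ c, Module ℂ (V c)]
    (ρ : ∀ c, U →ₐ[ℂ] Module.End ℂ (V c))
    (hfd : ∀ c, FiniteDimensional ℂ (V c))
    (hsimple : ∀ c (N : Submodule ℂ (V c)), (∀ (u : U), ∀ v ∈ N, ρ c u v ∈ N) → N = ⊥ ∨ N = ⊤)
    (hhw : ∀ c, ∃ v : V c, v ≠ 0 ∧ v ∈ wtSp q d K (ρ c) (fun i => (c i : ℤ)) ∧
      ∀ i, ρ c (E i) v = 0)
    (hwtsum : ∀ c, (⨆ μ : Fin n → ℤ, wtSp q d K (ρ c) μ) = ⊤)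
    (hextremal : ∀ c (w : W),
      Module.finrank ℂ (wtSp q d K (ρ c) (σ w (fun i => (c i : ℤ)))) = 1)
    -- the quantised coordinate ring A = O_q(G): an algebra of linear forms on U (via the
    -- injection ι into the dual space, multiplication being convolution through Δ),
    -- generated by the coordinate functions cf c ξ v = c^λ_{ξ,v} : u ↦ ξ (u · v)
    (A : Type) [Ring A] [Algebra ℂ A]
    (ι : A →ₗ[ℂ] (U →ₗ[ℂ] ℂ)) (hιinj : Function.Injective ι)
    (hι1 : ι 1 = ε.toLinearMap)
    (hιmul : ∀ x y : A, ι (x * y) =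
      (TensorProduct.lid ℂ ℂ).toLinearMap ∘ₗ (TensorProduct.map (ι x) (ι y)) ∘ₗ Δ.toLinearMap)
    (cf : ∀ c : Fin n → ℕ, Module.Dual ℂ (V c) → V c → A)
    (hcf : ∀ c ξ v u, ι (cf c ξ v) u = ξ (ρ c u v))
    (hAgen : Algebra.adjoin ℂ {x : A | ∃ c ξ v, x = cf c ξ v} = ⊤) :
    -- Q_{w₀, s_i w₀} = ⟨c^{ϖ_i}_{-ϖ_i, w₀ϖ_i}⟩ and Q_{w₀ s_i, w₀} = ⟨c^{ϖ_i}_{-w₀ϖ_i, ϖ_i}⟩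
    ∀ i : Fin n,
      (∀ (ξ : Module.Dual ℂ (V (Pi.single i 1))) (v : V (Pi.single i 1)),
        inDualWt q d K (ρ (Pi.single i 1)) (fun k => -((Pi.single i 1 : Fin n → ℕ) k : ℤ)) ξ → ξ ≠ 0 →
        v ∈ wtSp q d K (ρ (Pi.single i 1)) (σ w₀ (fun k => ((Pi.single i 1 : Fin n → ℕ) k : ℤ))) → v ≠ 0 →
        Qplus q d E K ρ σ cf w₀ ⊔ Qminus q d F K ρ σ w₀ cf (s i * w₀) =
          TwoSidedIdeal.span {cf (Pi.single i 1) ξ v}) ∧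
      (∀ (ξ : Module.Dual ℂ (V (Pi.single i 1))) (v : V (Pi.single i 1)),
        inDualWt q d K (ρ (Pi.single i 1)) (-(σ w₀ (fun k => ((Pi.single i 1 : Fin n → ℕ) k : ℤ)))) ξ → ξ ≠ 0 →
        v ∈ wtSp q d K (ρ (Pi.single i 1)) (fun k => ((Pi.single i 1 : Fin n → ℕ) k : ℤ)) → v ≠ 0 →
        Qplus q d E K ρ σ cf (w₀ * s i) ⊔ Qminus q d F K ρ σ w₀ cf w₀ =
          TwoSidedIdeal.span {cf (Pi.single i 1) ξ v}) := by
  have hq0 := transc_ne_zero hq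
  have hq1 := transc_zpow hq
  have hgen := Uq_gen q n a d U E F K hrel hUuniv
  have R := fun c => wrep_of q hq n a d hd_pos U E F K hrel hgen (V c) (ρ c) (hsimple c)
  let S : W → (Fin n → ℤ) →+ (Fin n → ℤ) := fun w =>
    AddEquiv.toAddMonoidHom (Multiplicative.toAdd (σ w) : AddAut (Fin n → ℤ))
  have hSσ : ∀ w μ, σ w μ = S w μ := fun w μ => rfl
  have S_mul : ∀ w w' μ, S (w * w') μ = S w (S w' μ) := by
    intro w w' μ
    rw [← hSσ, map_mul]; rfl
  have S_one : ∀ μ, S 1 μ = μ := by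
    intro μ
    rw [← hSσ, map_one]; rfl
  have hrefl : ∀ i μ, S (s i) μ = μ - μ i • alroot a i := by
    intro i μ
    rw [← hSσ, hs]
    funext k
    simp [alroot]
  have hss : ∀ i, (s i)⁻¹ = s i := by
    intro i
    apply inv_eq_of_mul_eq_one_left
    apply hσinj
    have h : ∀ μ, S (s i * s i) μ = S 1 μ := by
      intro μ
      rw [S_mul, S_one, hrefl, hrefl]
      funext l
      simp [alroot, ha_diag]
      ring
    exact AddEquiv.ext h
  have D : WData a d S s w₀ :=
    { diag := ha_diag
      dpos := hd_pos
      symm := ha_symm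
      S_mul := S_mul
      S_one := S_one
      refl := hrefl
      ind := by
        intro Q h1 h2 w
        have hw : w ∈ Subgroup.closure (Set.range s) := hsgen ▸ Subgroup.mem_top w
        induction hw using Subgroup.closure_induction_left with
        | one => exact h1
        | mul_left x hx y hy ih => obtain ⟨i, rfl⟩ := hx; exact h2 i _ ih
        | inv_mul_cancel x hx y hy ih =>
          obtain ⟨i, rfl⟩ := hx
          rw [hss]; exact h2 i _ ih
      long := fun μ hμ i => hw₀ μ hμ i }
  have hone : ∀ c w, Module.finrank ℂ (wtSp q d K (ρ c) (S w (fun i => (c i : ℤ)))) = 1 :=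
    hextremal
  have hone1 : ∀ c : Fin n → ℕ, Module.finrank ℂ (wtSp q d K (ρ c) (fun i => (c i : ℤ))) = 1 := by
    intro c
    have := hone c 1
    rwa [S_one] at this
  have hnb : ∀ c μ, Module.finrank ℂ (wtSp q d K (ρ c) μ) = 1 → wtSp q d K (ρ c) μ ≠ ⊥ := by
    intro c μ h h0
    rw [h0, finrank_bot] at h
    exact zero_ne_one h
  have hprop : ∀ c μ, Module.finrank ℂ (wtSp q d K (ρ c) μ) = 1 → ∀ v ∈ wtSp q d K (ρ c) μ,
      v ≠ 0 → ∀ v' ∈ wtSp q d K (ρ c) μ, ∃ t : ℂ, v' = t • v := by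
    intro c μ h v hv hv0 v' hv'
    obtain ⟨t, ht⟩ := exists_smul_eq_of_finrank_eq_one h (x := ⟨v, hv⟩)
      (by simpa using hv0) ⟨v', hv'⟩
    exact ⟨t, by simpa using (congrArg Subtype.val ht).symm⟩
  have hwts : ∀ c μ, wtSp q d K (ρ c) μ ≠ ⊥ →
      ∃ m : Fin n → ℤ, 0 ≤ m ∧ μ = (fun i => (c i : ℤ)) - rtc a m := by
    intro c μ h
    obtain ⟨v, hv0, hv, hEv⟩ := hhw c
    exact (R c).weights hv hv0 hEv h
  have hsq : ∀ c : Fin n → ℤ, 0 ≤ c → S (w₀ * w₀) c = c := by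
    apply D.sq
    intro c hc w
    have hcc : (fun i => (((fun i => (c i).toNat) i : ℕ) : ℤ)) = c := by
      funext i
      exact Int.toNat_of_nonneg (hc i)
    have := hwts (fun i => (c i).toNat) _ (hnb _ _ (hone (fun i => (c i).toNat) w))
    rwa [hcc] at this
  have hlow : ∀ (c : Fin n → ℕ), ∀ u ∈ wtSp q d K (ρ c) (S w₀ (fun i => (c i : ℤ))),
      ∀ k, ρ c (F k) u = 0 := by
    intro c u hu k
    have := hfd c
    have h1 := D.lowest (fun i => (c i : ℤ)) (fun μ => wtSp q d K (ρ c) μ ≠ ⊥)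
      (fun μ hμ i => (R c).refl hq0 hq1 hd_pos ha_diag hμ) (hwts c) k
    have h2 := (R c).hY k _ _ hu
    rw [not_not.mp h1] at h2
    simpa using h2
  have hdemF : ∀ c : Fin n → ℕ,
      demazure q d (Set.range F) K (ρ c) (fun i => (c i : ℤ)) = ⊤ := by
    intro c
    obtain ⟨v, hv0, hv, hEv⟩ := hhw c
    exact (R c).top_of_stable hv hv0 hEv _ (dem_le F _ hv) (fun k => dem_stable F _ k)
  have hdemE : ∀ c : Fin n → ℕ,
      demazure q d (Set.range E) K (ρ c) (S w₀ (fun i => (c i : ℤ))) = ⊤ := by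
    intro c
    obtain ⟨u, hu, hu0⟩ := Submodule.exists_mem_ne_zero_of_ne_bot (hnb _ _ (hone c w₀))
    exact (R c).dual.top_of_stable (lam := -(S w₀ (fun i => (c i : ℤ)))) (by simpa using hu) hu0
      (hlow c u hu) _ (dem_le E _ hu) (fun k => dem_stable E _ k)
  have hsn : ∀ k, (0 : Fin n → ℤ) ≤ Pi.single k 1 := fun k => by simp [Pi.single_nonneg]
  have hcf0 : ∀ c ξ v, (∀ y, ξ y = 0) → cf c ξ v = 0 := by
    intro c ξ v h
    apply hιinj
    ext u
    rw [hcf, h, map_zero]; rfl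
  have hcfs : ∀ c ξ v (t t' : ℂ), cf c (t • ξ) (t' • v) = (t * t') • cf c ξ v := by
    intro c ξ v t t'
    apply hιinj
    ext u
    have h1 : ι ((t * t') • cf c ξ v) u = (t * t') * ι (cf c ξ v) u := by
      rw [map_smul ι]; rfl
    rw [h1, hcf, hcf]
    simp
    ring
  have hsfix : ∀ i j : Fin n, j ≠ i → S (s i) (Pi.single j 1) = Pi.single j 1 := by
    intro i j h
    rw [hrefl]; simp [Ne.symm h]
  have hsself : ∀ i : Fin n, S (s i) (Pi.single i 1) = Pi.single i 1 - alroot a i := by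
    intro i
    rw [hrefl]; simp
  intro i
  have := hfd (Pi.single i 1)
  constructor
  · intro ξ v hξ hξ0 hv hv0
    have hQ0 : Qplus q d E K ρ σ cf w₀ = ⊥ := by
      apply span_zero_aux
      rintro _ ⟨j, ξ', v', hv', hξ', rfl⟩
      apply hcf0
      intro y
      apply hξ'
      rw [hSσ, hdemE]
      trivial
    rw [hQ0, bot_sup_eq]
    obtain ⟨v₁, hv₁0, hv₁, hEv₁⟩ := hhw (Pi.single i 1)
    rw [cast_single] at hv₁
    have hk := (R (Pi.single i 1)).key hq0 hq1 hd_pos ha_diag D.pointed hv₁ hv₁0 hEv₁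
      (demazure q d (Set.range F) K (ρ (Pi.single i 1)) (Pi.single i 1 - alroot a i))
      (dem_le F _) (fun k => dem_stable F _ k) (fun N h1 h2 => dem_min F _ N h1 h2) ξ
      (by
        intro ν hν x hx
        refine hξ ν ?_ x hx
        intro h
        apply hν
        rw [h, ← cast_single]
        funext k; simp) hξ0
    have hwt : ∀ j : Fin n, σ (s i * w₀ * w₀) (fun k => ((Pi.single j 1 : Fin n → ℕ) k : ℤ)) =
        S (s i) (Pi.single j 1) := by
      intro j
      rw [hSσ, cast_single, mul_assoc, S_mul, hsq _ (hsn j)]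
    apply span_single_aux
    · refine ⟨i, ξ, v, hv, ?_, rfl⟩
      rw [hwt, hsself]
      exact hk.1
    · rintro _ ⟨j, ξ', v', hv', hξ', rfl⟩
      rw [hwt] at hξ'
      by_cases hj : j = i
      · subst hj
        rw [hsself] at hξ'
        obtain ⟨t, rfl⟩ := hk.2 ξ' hξ'
        obtain ⟨t', rfl⟩ := hprop _ _ (hextremal _ w₀) v hv hv0 v' hv'
        exact ⟨t * t', hcfs _ _ _ _ _⟩
      · refine ⟨0, ?_⟩
        rw [zero_smul]
        apply hcf0
        intro y
        apply hξ'
        rw [hsfix i j hj, ← cast_single, hdemF]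
        trivial
  · intro ξ v hξ hξ0 hv hv0
    have hQ0 : Qminus q d F K ρ σ w₀ cf w₀ = ⊥ := by
      apply span_zero_aux
      rintro _ ⟨j, ξ', v', hv', hξ', rfl⟩
      apply hcf0
      intro y
      apply hξ'
      rw [hSσ, cast_single, hsq _ (hsn j), ← cast_single, hdemF]
      trivial
    rw [hQ0, sup_bot_eq]
    obtain ⟨k₀, hk₀⟩ := D.tau hsq i
    have hroot := D.tau_root hsq hk₀
    obtain ⟨u, hu, hu0⟩ := Submodule.exists_mem_ne_zero_of_ne_bot (hnb _ _ (hone (Pi.single i 1) w₀))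
    have hFu := hlow _ u hu
    rw [cast_single, hk₀] at hu
    have hneg : -((Pi.single k₀ 1 : Fin n → ℤ) - alroot a k₀) =
        S w₀ (Pi.single i 1 - alroot a i) := by
      rw [map_sub, hk₀, hroot]; abel
    have hk := (R (Pi.single i 1)).dual.key hq0 hq1 hd_pos ha_diag D.pointed hu hu0 hFu
      (demazure q d (Set.range E) K (ρ (Pi.single i 1)) (-(Pi.single k₀ 1 - alroot a k₀)))
      (dem_le E _) (fun k => dem_stable E _ k) (fun N h1 h2 => dem_min E _ N h1 h2) ξ
      (by
        intro ν hν x hx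
        refine hξ (-ν) ?_ x hx
        intro h
        apply hν
        rw [hSσ, cast_single, hk₀, neg_neg] at h
        exact neg_injective h) hξ0
    rw [hneg] at hk
    have hwt : ∀ j : Fin n, σ (w₀ * s i) (fun k => ((Pi.single j 1 : Fin n → ℕ) k : ℤ)) =
        S w₀ (S (s i) (Pi.single j 1)) := by
      intro j
      rw [hSσ, cast_single, S_mul]
    apply span_single_aux
    · refine ⟨i, ξ, v, hv, ?_, rfl⟩
      rw [hwt, hsself]
      exact hk.1
    · rintro _ ⟨j, ξ', v', hv', hξ', rfl⟩
      rw [hwt] at hξ'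
      by_cases hj : j = i
      · subst hj
        rw [hsself] at hξ'
        obtain ⟨t, rfl⟩ := hk.2 ξ' hξ'
        obtain ⟨t', rfl⟩ := hprop _ _ (hone1 _) v hv hv0 v' hv'
        exact ⟨t * t', hcfs _ _ _ _ _⟩
      · refine ⟨0, ?_⟩
        rw [zero_smul]
        apply hcf0
        intro y
        apply hξ'
        rw [hsfix i j hj, ← cast_single, hdemE]
        trivial
end
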